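/- arXiv:1812.05153 — 5 statements merged into one kernel-verified Lean document; each statement's English description precedes it below -/
import Mathlib

section
/- Let R be a commutative ring, S ⊆ R a multiplicative subset, and 𝒞 an R-linear abelian category. Then the category 𝒞 ⊗_R S⁻¹R is abelian, and the canonical functor F : 𝒞 → 𝒞 ⊗_R S⁻¹R (the identity on objects, base extension Hom_𝒞(M,N) → Hom_𝒞(M,N) ⊗_R S⁻¹R on morphisms) is exact. Moreover, if 𝒞 is R-linearly symmetric monoidal, then 𝒞 ⊗_R S⁻¹R is symmetric monoidal in a natural way and F is a monoidal functor. -/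
open CategoryTheory TensorProduct

universe w v u

/-- The base change `𝒞 ⊗_R R'` of an `R`-linear category `𝒞` along `R → R'`:
same objects as `𝒞`, morphisms `Hom_𝒞(M,N) ⊗_R R'`. -/
structure BaseChange (R : Type u) [CommRing R] (R' : Type u) [CommRing R'] [Algebra R R']
    (C : Type v) [Category.{w} C] [Preadditive C] [Linear R C] where
  obj : C

variable (R : Type u) [CommRing R] (R' : Type u) [CommRing R'] [Algebra R R']
variable (C : Type v) [Category.{w} C] [Preadditive C] [Linear R C]

variable {C}

/-- Composition in `𝒞` as an `R`-bilinear map. -/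
noncomputable def compBilinear (X Y Z : C) : (X ⟶ Y) →ₗ[R] (Y ⟶ Z) →ₗ[R] (X ⟶ Z) where
  toFun f := Linear.leftComp R Z f
  map_add' f f' := by ext g; simp [Linear.leftComp]
  map_smul' r f := by ext g; simp [Linear.leftComp]

/-- Composition in the base change category, induced by composition in `𝒞` and
multiplication in `R'` : `(f ⊗ r) ≫ (g ⊗ s) = (f ≫ g) ⊗ rs`. -/
noncomputable def compMap (X Y Z : C) :
    (((X ⟶ Y) ⊗[R] R') ⊗[R] ((Y ⟶ Z) ⊗[R] R')) →ₗ[R] ((X ⟶ Z) ⊗[R] R') :=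
  (TensorProduct.map (TensorProduct.lift (compBilinear R X Y Z)) (LinearMap.mul' R R')).comp
    (TensorProduct.tensorTensorTensorComm R (X ⟶ Y) R' (Y ⟶ Z) R').toLinearMap

variable (C)

noncomputable instance : Category (BaseChange R R' C) where
  Hom X Y := (X.obj ⟶ Y.obj) ⊗[R] R'
  id X := 𝟙 X.obj ⊗ₜ[R] (1 : R')
  comp {X Y Z} f g := compMap R R' X.obj Y.obj Z.obj (f ⊗ₜ[R] g)
  id_comp := by
    intro X Y f
    show compMap R R' _ _ _ (_ ⊗ₜ[R] f) = f
    induction f using TensorProduct.induction_on with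
    | zero => simp
    | tmul g r => simp [compMap, compBilinear, Linear.leftComp]
    | add f₁ f₂ h₁ h₂ => rw [tmul_add, map_add, h₁, h₂]
  comp_id := by
    intro X Y f
    show compMap R R' _ _ _ (f ⊗ₜ[R] _) = f
    induction f using TensorProduct.induction_on with
    | zero => simp
    | tmul g r => simp [compMap, compBilinear, Linear.leftComp]
    | add f₁ f₂ h₁ h₂ => rw [add_tmul, map_add, h₁, h₂]
  assoc := by
    intro W X Y Z f g h
    show compMap R R' _ _ _ ((compMap R R' _ _ _ (f ⊗ₜ[R] g)) ⊗ₜ[R] h)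
      = compMap R R' _ _ _ (f ⊗ₜ[R] (compMap R R' _ _ _ (g ⊗ₜ[R] h)))
    induction f using TensorProduct.induction_on with
    | zero => simp
    | add f₁ f₂ h₁ h₂ => simp only [add_tmul, tmul_add, map_add, h₁, h₂]
    | tmul a r =>
      induction g using TensorProduct.induction_on with
      | zero => simp
      | add g₁ g₂ h₁ h₂ => simp only [add_tmul, tmul_add, map_add, h₁, h₂]
      | tmul b s =>
        induction h using TensorProduct.induction_on with
        | zero => simp
        | add h₁ h₂ k₁ k₂ => simp only [add_tmul, tmul_add, map_add, k₁, k₂]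
        | tmul c t => simp [compMap, compBilinear, Linear.leftComp, mul_assoc]

/-- The canonical functor `F : 𝒞 → 𝒞 ⊗_R R'`: the identity on objects and the natural base
extension `f ↦ f ⊗ 1` on morphisms. -/
noncomputable def baseChangeFunctor : C ⥤ BaseChange R R' C where
  obj X := ⟨X⟩
  map f := f ⊗ₜ[R] (1 : R')
  map_id := fun X => rfl
  map_comp := by
    intro X Y Z f g
    show _ = compMap R R' X Y Z _
    simp [compMap, compBilinear, Linear.leftComp]

/-!
An object of `C` is `S`-torsion if some `s ∈ S` acts on it as zero; the `S`-torsion objects form a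
Serre class. If `f` has `S`-torsion kernel and cokernel, then each half of its epi-mono
factorization has an inverse up to some `s ∈ S`, so `f` becomes invertible in `C ⊗ S⁻¹R`, where the
elements of `S` act invertibly. Conversely, morphisms of `C ⊗ S⁻¹R` are fractions `f / s` and `s`
itself has `S`-torsion kernel and cokernel. Hence `C ⊗ S⁻¹R` is the Serre quotient of `C` by the
`S`-torsion objects, and Serre quotients are abelian with exact projection.

The tensor product extends to morphisms of `C ⊗ R'` by linearity for every `R`-algebra `R'`, and
each axiom of a symmetric monoidal category is multilinear in the morphisms involved, so it need
only be checked on pure tensors.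
-/

section SerreQuotient

open Limits ZeroObject

lemma smul_id_comp_eq_comp_smul_id {A E : Type*} [Semiring A] [Category* E] [Preadditive E]
    [Linear A E] {X Y : E} (a : A) (f : X ⟶ Y) : (a • 𝟙 X) ≫ f = f ≫ (a • 𝟙 Y) := by
  rw [Linear.smul_comp, Linear.comp_smul, Category.id_comp, Category.comp_id]

/-- The property of being `S`-torsion, for objects of an `A`-linear category: some element of the
submonoid `S` of `A` acts as zero. -/
def smulTorsion {A : Type*} [Semiring A] (S : Submonoid A) (E : Type*) [Category* E]
    [Preadditive E] [Linear A E] : ObjectProperty E :=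
  fun X => ∃ s : S, (s : A) • 𝟙 X = 0

namespace smulTorsion

variable {A : Type*} [Semiring A] {S : Submonoid A} {E : Type*} [Category* E] [Abelian E]
  [Linear A E]

instance : (smulTorsion S E).IsSerreClass where
  exists_zero := ⟨0, isZero_zero E, 1, (isZero_zero E).eq_of_src _ _⟩
  prop_of_mono f _ := fun ⟨s, hs⟩ =>
    ⟨s, zero_of_comp_mono f (by rw [smul_id_comp_eq_comp_smul_id, hs, comp_zero])⟩
  prop_of_epi f _ := fun ⟨s, hs⟩ =>
    ⟨s, zero_of_epi_comp f (by rw [← smul_id_comp_eq_comp_smul_id, hs, zero_comp])⟩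
  prop_X₂_of_shortExact {T} hT := by
    rintro ⟨s, hs⟩ ⟨t, ht⟩
    have := hT.mono_f
    have h_comp_g : ((t : A) • 𝟙 T.X₂) ≫ T.g = 0 := by
      rw [smul_id_comp_eq_comp_smul_id, ht, comp_zero]
    refine ⟨s * t, ?_⟩
    calc ((s * t : S) : A) • 𝟙 T.X₂ = (s : A) • (hT.exact.lift _ h_comp_g ≫ T.f) := by
          rw [hT.exact.lift_f, Submonoid.coe_mul, mul_smul]
      _ = hT.exact.lift _ h_comp_g ≫ ((s : A) • 𝟙 T.X₁) ≫ T.f := by simp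
      _ = 0 := by rw [hs, zero_comp, comp_zero]

lemma exists_comp_eq_smul_id_of_epi {X Y : E} (p : X ⟶ Y) [Epi p]
    (hp : (smulTorsion S E).monoModSerre p) :
    ∃ (q : Y ⟶ X) (s : S), p ≫ q = (s : A) • 𝟙 X ∧ q ≫ p = (s : A) • 𝟙 Y := by
  obtain ⟨s, hs⟩ := hp
  have h_kernel : kernel.ι p ≫ ((s : A) • 𝟙 X) = 0 := by
    rw [← smul_id_comp_eq_comp_smul_id, hs, zero_comp]
  have h_fac : p ≫ Abelian.epiDesc p _ h_kernel = (s : A) • 𝟙 X := Abelian.comp_epiDesc _ _ _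
  exact ⟨_, s, h_fac, by simp [← cancel_epi p, reassoc_of% h_fac]⟩

lemma exists_comp_eq_smul_id_of_mono {X Y : E} (i : X ⟶ Y) [Mono i]
    (hi : (smulTorsion S E).epiModSerre i) :
    ∃ (q : Y ⟶ X) (s : S), i ≫ q = (s : A) • 𝟙 X ∧ q ≫ i = (s : A) • 𝟙 Y := by
  obtain ⟨s, hs⟩ := hi
  have h_cokernel : ((s : A) • 𝟙 Y) ≫ cokernel.π i = 0 := by
    rw [smul_id_comp_eq_comp_smul_id, hs, comp_zero]
  have h_fac : Abelian.monoLift i _ h_cokernel ≫ i = (s : A) • 𝟙 Y := Abelian.monoLift_comp _ _ _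
  exact ⟨_, s, by simp [← cancel_mono i, h_fac], h_fac⟩

lemma isoModSerre_smul_id (X : E) (s : S) : (smulTorsion S E).isoModSerre ((s : A) • 𝟙 X) := by
  refine ⟨⟨s, zero_of_comp_mono (kernel.ι ((s : A) • 𝟙 X)) ?_⟩,
    ⟨s, zero_of_epi_comp (cokernel.π ((s : A) • 𝟙 X)) ?_⟩⟩
  · rw [smul_id_comp_eq_comp_smul_id]
    exact kernel.condition _
  · rw [← smul_id_comp_eq_comp_smul_id]
    exact cokernel.condition _

end smulTorsion

theorem isLocalization_of_exists_leftFraction {E D : Type*} [Category* E] [Category* D]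
    {W : MorphismProperty E} [W.HasLeftCalculusOfFractions] (F : E ⥤ D) [F.EssSurj]
    (h_inv : W.IsInvertedBy F)
    (h_eq : ∀ ⦃X Y : E⦄ (f g : X ⟶ Y), F.map f = F.map g →
      ∃ (Z : E) (w : Y ⟶ Z), W w ∧ f ≫ w = g ≫ w)
    (h_frac : ∀ ⦃X Y : E⦄ (f : F.obj X ⟶ F.obj Y),
      ∃ (Z : E) (g : X ⟶ Z) (w : Y ⟶ Z), W w ∧ f ≫ F.map w = F.map g) :
    F.IsLocalization W := by
  obtain ⟨G, rfl⟩ : ∃ G : W.Localization ⥤ D, W.Q ⋙ G = F :=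
    ⟨_, Localization.Construction.fac F h_inv⟩
  have h_faithful : G.Faithful := by
    refine Functor.faithful_of_comp_of_hasLeftCalculusOfFractions W.Q W G fun X Y f g hfg => ?_
    obtain ⟨Z, w, hw, hfw⟩ := h_eq f g hfg
    have := Localization.inverts W.Q W w hw
    rw [← cancel_mono (W.Q.map w), ← W.Q.map_comp, ← W.Q.map_comp, hfw]
  have h_full : G.Full := by
    have := Localization.essSurj W.Q W
    refine G.full_of_comp_essSurj W.Q fun X Y f => ?_
    obtain ⟨Z, g, w, hw, hfw⟩ := h_frac f
    have := Localization.inverts W.Q W w hw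
    have : IsIso (G.map (W.Q.map w)) := h_inv w hw
    refine ⟨W.Q.map g ≫ inv (W.Q.map w), ?_⟩
    rw [G.map_comp, Functor.map_inv, IsIso.comp_inv_eq]
    exact hfw.symm
  have h_essSurj : G.EssSurj := ⟨fun Y => ⟨_, ⟨(W.Q ⋙ G).objObjPreimageIso Y⟩⟩⟩
  have : G.IsEquivalence := {}
  exact .of_equivalence_target W.Q W _ G.asEquivalence (Iso.refl _)

end SerreQuotient

/-- An `A`-linear functor localizes Hom-modules at `S` if each of its maps
`Hom(X, Y) → Hom(F X, F Y)` is a localization of `A`-modules at `S`. -/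
class LocalizesHoms {A : Type*} [CommRing A] (S : Submonoid A) {E D : Type*} [Category* E]
    [Category* D] [Preadditive E] [Linear A E] [Preadditive D] [Linear A D]
    (F : E ⥤ D) [F.Additive] [F.Linear A] : Prop where
  isLocalizedModule (X Y : E) :
    IsLocalizedModule S (F.mapLinearMap A : (X ⟶ Y) →ₗ[A] (F.obj X ⟶ F.obj Y))

namespace LocalizesHoms

attribute [instance] isLocalizedModule

variable {A : Type*} [CommRing A] {S : Submonoid A} {E D : Type*} [Category* E] [Category* D]

section Preadditive

variable [Preadditive E] [Linear A E] [Preadditive D] [Linear A D]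
  (F : E ⥤ D) [F.Additive] [F.Linear A] [LocalizesHoms S F]

variable (S) in
lemma exists_smul_eq_map {X Y : E} (f : F.obj X ⟶ F.obj Y) :
    ∃ (g : X ⟶ Y) (s : S), (s : A) • f = F.map g := by
  obtain ⟨⟨g, s⟩, hg⟩ :=
    IsLocalizedModule.surj S (F.mapLinearMap A : (X ⟶ Y) →ₗ[A] (F.obj X ⟶ F.obj Y)) f
  exact ⟨g, s, hg⟩

variable (S) in
lemma map_eq_zero_iff {X Y : E} (f : X ⟶ Y) : F.map f = 0 ↔ ∃ s : S, (s : A) • f = 0 :=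
  IsLocalizedModule.eq_zero_iff S (F.mapLinearMap A)

lemma isIso_smul_id_obj (X : E) (s : S) : IsIso ((s : A) • 𝟙 (F.obj X)) := by
  obtain ⟨e, he⟩ := ((Module.End.isUnit_iff _).1
    (IsLocalizedModule.map_units (F.mapLinearMap A : (X ⟶ X) →ₗ[A] _) s)).2 (𝟙 (F.obj X))
  replace he : (s : A) • e = 𝟙 (F.obj X) := he
  exact ⟨e, by simp [he], by simp [he]⟩

lemma isIso_map_of_comp_eq_smul_id {X Y : E} {f : X ⟶ Y} {g : Y ⟶ X} {s : S}
    (hfg : f ≫ g = (s : A) • 𝟙 X) (hgf : g ≫ f = (s : A) • 𝟙 Y) : IsIso (F.map f) := by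
  have hX : IsIso (F.map f ≫ F.map g) := by
    rw [← F.map_comp, hfg, F.map_smul, F.map_id]
    exact isIso_smul_id_obj F X s
  have hY : IsIso (F.map g ≫ F.map f) := by
    rw [← F.map_comp, hgf, F.map_smul, F.map_id]
    exact isIso_smul_id_obj F Y s
  have := mono_of_mono (F.map f) (F.map g)
  have : IsSplitEpi (F.map f) := ⟨⟨inv (F.map g ≫ F.map f) ≫ F.map g, by simp⟩⟩
  exact isIso_of_mono_of_isSplitEpi _

end Preadditive

section Abelian

open smulTorsion

variable [Abelian E] [Linear A E] [Preadditive D] [Linear A D]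
  (F : E ⥤ D) [F.Additive] [F.Linear A] [LocalizesHoms S F]

lemma isInvertedBy_isoModSerre : (smulTorsion S E).isoModSerre.IsInvertedBy F := by
  rintro X Y f ⟨h_mono, h_epi⟩
  obtain ⟨q, s, hpq, hqp⟩ := exists_comp_eq_smul_id_of_epi (Abelian.factorThruImage f)
    h_mono.isoModSerre_factorThruImage.1
  obtain ⟨r, t, hir, hri⟩ := exists_comp_eq_smul_id_of_mono (Abelian.image.ι f)
    h_epi.isoModSerre_image_ι.2
  have := isIso_map_of_comp_eq_smul_id F hpq hqp
  have := isIso_map_of_comp_eq_smul_id F hir hri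
  rw [← Abelian.image.fac f, F.map_comp]
  infer_instance

variable (S) in
theorem isLocalization [F.EssSurj] : F.IsLocalization (smulTorsion S E).isoModSerre := by
  refine isLocalization_of_exists_leftFraction F (isInvertedBy_isoModSerre F) ?_ ?_
  · intro X Y f g hfg
    obtain ⟨s, hs⟩ := (map_eq_zero_iff S F (f - g)).1 (by rw [F.map_sub, hfg, sub_self])
    exact ⟨Y, (s : A) • 𝟙 Y, isoModSerre_smul_id Y s, by simpa [sub_eq_zero, smul_sub] using hs⟩
  · intro X Y f
    obtain ⟨g, s, hg⟩ := exists_smul_eq_map S F f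
    exact ⟨Y, g, (s : A) • 𝟙 Y, isoModSerre_smul_id Y s, by simpa using hg⟩

end Abelian

end LocalizesHoms

namespace BaseChange

variable {R R' C}

section Linear

variable (R) in
/-- The pure tensor `f ⊗ r` as a morphism of `BaseChange R R' C`. -/
noncomputable def tmul {X Y : C} (f : X ⟶ Y) (r : R') : (⟨X⟩ : BaseChange R R' C) ⟶ ⟨Y⟩ :=
  f ⊗ₜ[R] r

lemma id_eq_tmul (X : BaseChange R R' C) : 𝟙 X = tmul R (𝟙 X.obj) 1 := rfl

@[simp]
lemma tmul_comp_tmul {X Y Z : C} (f : X ⟶ Y) (g : Y ⟶ Z) (r s : R') :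
    tmul R f r ≫ tmul R g s = tmul R (f ≫ g) (r * s) := by
  change compMap R R' X Y Z _ = _
  simp [compMap, compBilinear, tmul]

noncomputable instance : Preadditive (BaseChange R R' C) where
  homGroup X Y := inferInstanceAs (AddCommGroup ((X.obj ⟶ Y.obj) ⊗[R] R'))
  add_comp X Y Z f f' g := by
    change compMap R R' _ _ _ _ = compMap R R' _ _ _ _ + compMap R R' _ _ _ _
    rw [← map_add, ← add_tmul]
  comp_add X Y Z f g g' := by
    change compMap R R' _ _ _ _ = compMap R R' _ _ _ _ + compMap R R' _ _ _ _
    rw [← map_add, ← tmul_add]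

noncomputable instance : Linear R (BaseChange R R' C) where
  homModule X Y := inferInstanceAs (Module R ((X.obj ⟶ Y.obj) ⊗[R] R'))
  smul_comp X Y Z a f g := by
    change compMap R R' _ _ _ _ = a • compMap R R' _ _ _ _
    rw [← map_smul, smul_tmul']
  comp_smul X Y Z f a g := by
    change compMap R R' _ _ _ _ = a • compMap R R' _ _ _ _
    rw [← map_smul, TensorProduct.tmul_smul]

@[elab_as_elim]
lemma hom_induction {X Y : BaseChange R R' C} {motive : (X ⟶ Y) → Prop} (f : X ⟶ Y)
    (tmul : ∀ (f : X.obj ⟶ Y.obj) (r : R'), motive (tmul R f r))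
    (add : ∀ f g, motive f → motive g → motive (f + g)) : motive f :=
  have zero : motive (0 ⊗ₜ[R] (0 : R')) := tmul 0 0
  TensorProduct.induction_on f (zero_tmul (R := R) (X.obj ⟶ Y.obj) (0 : R') ▸ zero) tmul add

@[simp]
lemma baseChangeFunctor_obj (X : C) : (baseChangeFunctor R R' C).obj X = ⟨X⟩ := rfl

@[simp]
lemma baseChangeFunctor_map {X Y : C} (f : X ⟶ Y) :
    (baseChangeFunctor R R' C).map f = tmul R f 1 := rfl

instance : (baseChangeFunctor R R' C).Additive where
  map_add {_ _ f g} := add_tmul f g (1 : R')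

instance : (baseChangeFunctor R R' C).Linear R where
  map_smul f a := (smul_tmul' a f (1 : R')).symm

instance : (baseChangeFunctor R R' C).EssSurj :=
  Functor.essSurj_of_surj fun X => ⟨X.obj, rfl⟩

instance (S : Submonoid R) [IsLocalization S R'] :
    LocalizesHoms S (baseChangeFunctor R R' C) where
  isLocalizedModule X Y :=
    IsLocalizedModule.of_linearEquiv S (TensorProduct.mk R R' (X ⟶ Y) 1)
      (TensorProduct.comm R R' (X ⟶ Y))

end Linear

section Monoidal

open MonoidalCategory

variable [MonoidalCategory C] [MonoidalPreadditive C] [MonoidalLinear R C]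

noncomputable instance : MonoidalCategoryStruct (BaseChange R R' C) where
  tensorObj X Y := ⟨X.obj ⊗ Y.obj⟩
  whiskerLeft X {Y Z} f := LinearMap.rTensor R'
    ((tensorLeft X.obj).mapLinearMap R : (Y.obj ⟶ Z.obj) →ₗ[R] _) f
  whiskerRight {Y Z} f X := LinearMap.rTensor R'
    ((tensorRight X.obj).mapLinearMap R : (Y.obj ⟶ Z.obj) →ₗ[R] _) f
  tensorUnit := ⟨𝟙_ C⟩
  associator X Y Z := (baseChangeFunctor R R' C).mapIso (α_ X.obj Y.obj Z.obj)
  leftUnitor X := (baseChangeFunctor R R' C).mapIso (λ_ X.obj)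
  rightUnitor X := (baseChangeFunctor R R' C).mapIso (ρ_ X.obj)

@[simp]
lemma tensorObj_obj (X Y : BaseChange R R' C) : (X ⊗ Y).obj = X.obj ⊗ Y.obj := rfl

@[simp]
lemma tensorUnit_obj : (𝟙_ (BaseChange R R' C)).obj = 𝟙_ C := rfl

@[simp]
lemma associator_hom (X Y Z : BaseChange R R' C) :
    (α_ X Y Z).hom = tmul R (α_ X.obj Y.obj Z.obj).hom 1 := rfl

@[simp]
lemma associator_inv (X Y Z : BaseChange R R' C) :
    (α_ X Y Z).inv = tmul R (α_ X.obj Y.obj Z.obj).inv 1 := rfl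

@[simp]
lemma leftUnitor_hom (X : BaseChange R R' C) : (λ_ X).hom = tmul R (λ_ X.obj).hom 1 := rfl

@[simp]
lemma rightUnitor_hom (X : BaseChange R R' C) : (ρ_ X).hom = tmul R (ρ_ X.obj).hom 1 := rfl

@[simp]
lemma whiskerLeft_tmul (X : BaseChange R R' C) {Y Z : C} (f : Y ⟶ Z) (r : R') :
    X ◁ tmul R f r = tmul R (X.obj ◁ f) r := rfl

@[simp]
lemma tmul_whiskerRight {Y Z : C} (f : Y ⟶ Z) (r : R') (X : BaseChange R R' C) :
    tmul R f r ▷ X = tmul R (f ▷ X.obj) r := rfl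

lemma tensorHom_eq_comp {X Y Z W : BaseChange R R' C} (f : X ⟶ Y) (g : Z ⟶ W) :
    f ⊗ₘ g = f ▷ Z ≫ Y ◁ g := rfl

@[simp]
lemma tmul_tensorHom_tmul {X Y Z W : C} (f : X ⟶ Y) (g : Z ⟶ W) (r s : R') :
    tmul R f r ⊗ₘ tmul R g s = tmul R (f ⊗ₘ g) (r * s) := by
  rw [tensorHom_eq_comp, tmul_whiskerRight, whiskerLeft_tmul, tmul_comp_tmul,
    MonoidalCategory.tensorHom_def]

lemma whiskerLeft_add (X : BaseChange R R' C) {Y Z : BaseChange R R' C} (f g : Y ⟶ Z) :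
    X ◁ (f + g) = X ◁ f + X ◁ g :=
  map_add (LinearMap.rTensor R' _) f g

lemma add_whiskerRight {Y Z : BaseChange R R' C} (f g : Y ⟶ Z) (X : BaseChange R R' C) :
    (f + g) ▷ X = f ▷ X + g ▷ X :=
  map_add (LinearMap.rTensor R' _) f g

lemma tensorHom_add {X Y Z W : BaseChange R R' C} (f : X ⟶ Y) (g h : Z ⟶ W) :
    f ⊗ₘ (g + h) = f ⊗ₘ g + f ⊗ₘ h := by
  simp only [tensorHom_eq_comp, whiskerLeft_add, Preadditive.comp_add]

lemma add_tensorHom {X Y Z W : BaseChange R R' C} (f g : X ⟶ Y) (h : Z ⟶ W) :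
    (f + g) ⊗ₘ h = f ⊗ₘ h + g ⊗ₘ h := by
  simp only [tensorHom_eq_comp, add_whiskerRight, Preadditive.add_comp]

lemma tensorHom_comp_tensorHom {X₁ Y₁ Z₁ X₂ Y₂ Z₂ : BaseChange R R' C} (f₁ : X₁ ⟶ Y₁)
    (f₂ : X₂ ⟶ Y₂) (g₁ : Y₁ ⟶ Z₁) (g₂ : Y₂ ⟶ Z₂) :
    (f₁ ⊗ₘ f₂) ≫ (g₁ ⊗ₘ g₂) = (f₁ ≫ g₁) ⊗ₘ (f₂ ≫ g₂) := by
  induction f₁ using hom_induction with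
  | add _ _ h h' => simp only [add_tensorHom, Preadditive.add_comp, h, h']
  | tmul f₁ r₁ =>
    induction f₂ using hom_induction with
    | add _ _ h h' => simp only [tensorHom_add, Preadditive.add_comp, h, h']
    | tmul f₂ r₂ =>
      induction g₁ using hom_induction with
      | add _ _ h h' => simp only [add_tensorHom, Preadditive.comp_add, h, h']
      | tmul g₁ s₁ =>
        induction g₂ using hom_induction with
        | add _ _ h h' => simp only [tensorHom_add, Preadditive.comp_add, h, h']
        | tmul g₂ s₂ =>
          simp only [tmul_tensorHom_tmul, tmul_comp_tmul,
            MonoidalCategory.tensorHom_comp_tensorHom, mul_mul_mul_comm]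

lemma associator_naturality {X₁ X₂ X₃ Y₁ Y₂ Y₃ : BaseChange R R' C} (f₁ : X₁ ⟶ Y₁)
    (f₂ : X₂ ⟶ Y₂) (f₃ : X₃ ⟶ Y₃) :
    ((f₁ ⊗ₘ f₂) ⊗ₘ f₃) ≫ (α_ Y₁ Y₂ Y₃).hom = (α_ X₁ X₂ X₃).hom ≫ (f₁ ⊗ₘ (f₂ ⊗ₘ f₃)) := by
  induction f₁ using hom_induction with
  | add _ _ h h' => simp only [add_tensorHom, Preadditive.add_comp, Preadditive.comp_add, h, h']
  | tmul f₁ r₁ =>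
    induction f₂ using hom_induction with
    | add _ _ h h' =>
      simp only [add_tensorHom, tensorHom_add, Preadditive.add_comp, Preadditive.comp_add, h, h']
    | tmul f₂ r₂ =>
      induction f₃ using hom_induction with
      | add _ _ h h' =>
        simp only [tensorHom_add, Preadditive.add_comp, Preadditive.comp_add, h, h']
      | tmul f₃ r₃ =>
        simp only [tmul_tensorHom_tmul, associator_hom, tmul_comp_tmul,
          MonoidalCategory.associator_naturality, mul_one, one_mul, mul_assoc]

noncomputable instance : MonoidalCategory (BaseChange R R' C) where
  id_tensorHom_id X Y := by simp [id_eq_tmul]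
  tensorHom_comp_tensorHom := tensorHom_comp_tensorHom
  whiskerLeft_id X Y := by simp [id_eq_tmul]
  id_whiskerRight X Y := by simp [id_eq_tmul]
  associator_naturality := associator_naturality
  leftUnitor_naturality f := by
    induction f using hom_induction with
    | add _ _ h h' => simp only [whiskerLeft_add, Preadditive.add_comp, Preadditive.comp_add, h, h']
    | tmul f r => simp
  rightUnitor_naturality f := by
    induction f using hom_induction with
    | add _ _ h h' =>
      simp only [add_whiskerRight, Preadditive.add_comp, Preadditive.comp_add, h, h']
    | tmul f r => simp
  tensorHom_def := tensorHom_eq_comp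
  pentagon W X Y Z := by simp
  triangle X Y := by simp

noncomputable instance [BraidedCategory C] : BraidedCategory (BaseChange R R' C) where
  braiding X Y := (baseChangeFunctor R R' C).mapIso (β_ X.obj Y.obj)
  braiding_naturality_right X Y Z f := by
    induction f using hom_induction with
    | add _ _ h h' =>
      simp only [whiskerLeft_add, add_whiskerRight, Preadditive.add_comp, Preadditive.comp_add,
        h, h']
    | tmul f r => simp
  braiding_naturality_left f Z := by
    induction f using hom_induction with
    | add _ _ h h' =>
      simp only [whiskerLeft_add, add_whiskerRight, Preadditive.add_comp, Preadditive.comp_add,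
        h, h']
    | tmul f r => simp
  hexagon_forward X Y Z := by simp
  hexagon_reverse X Y Z := by simp

@[simp]
lemma braiding_hom [BraidedCategory C] (X Y : BaseChange R R' C) :
    (β_ X Y).hom = tmul R (β_ X.obj Y.obj).hom 1 := rfl

noncomputable instance [SymmetricCategory C] : SymmetricCategory (BaseChange R R' C) where
  symmetry X Y := by simp [id_eq_tmul]

noncomputable instance : (baseChangeFunctor R R' C).Monoidal := Functor.CoreMonoidal.toMonoidal
  { εIso := Iso.refl (⟨𝟙_ C⟩ : BaseChange R R' C)
    μIso X Y := Iso.refl (⟨X ⊗ Y⟩ : BaseChange R R' C)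
    μIso_hom_natural_left f X := by simp [id_eq_tmul]
    μIso_hom_natural_right X f := by simp [id_eq_tmul]
    associativity X Y Z := by simp [id_eq_tmul]
    left_unitality X := by simp [id_eq_tmul]
    right_unitality X := by simp [id_eq_tmul] }

end Monoidal

end BaseChange

theorem base_change_of_abelian_category_along_localization_general
    (R : Type u) [CommRing R] (S : Submonoid R)
    (R' : Type u) [CommRing R'] [Algebra R R'] [IsLocalization S R']
    (C : Type v) [Category.{w} C] [Abelian C] [Linear R C] :
    Nonempty (Abelian (BaseChange R R' C)) ∧
    Nonempty (Limits.PreservesFiniteLimits (baseChangeFunctor R R' C)) ∧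
    Nonempty (Limits.PreservesFiniteColimits (baseChangeFunctor R R' C)) ∧
    ∀ [MonoidalCategory C] [MonoidalPreadditive C] [SymmetricCategory C] [MonoidalLinear R C],
      ∃ m : MonoidalCategory (BaseChange R R' C),
        ∃ _ : @SymmetricCategory _ _ m,
          Nonempty (@Functor.Monoidal C _ _ (BaseChange R R' C) _ m
            (baseChangeFunctor R R' C)) := by
  have := LocalizesHoms.isLocalization S (baseChangeFunctor R R' C)
  open ObjectProperty.SerreClassLocalization in
  exact ⟨⟨abelian (baseChangeFunctor R R' C) (smulTorsion S C)⟩,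
    ⟨preservesFiniteLimits (baseChangeFunctor R R' C) (smulTorsion S C)⟩,
    ⟨preservesFiniteColimits (baseChangeFunctor R R' C) (smulTorsion S C)⟩,
    inferInstance, inferInstance, ⟨inferInstance⟩⟩

/-- Let `R` be a commutative ring, `S ⊆ R` a multiplicative subset and `𝒞`
an `R`-linear abelian category.  Then `𝒞 ⊗_R S⁻¹R` is abelian and the canonical functor
`F : 𝒞 → 𝒞 ⊗_R S⁻¹R` is exact (it preserves finite limits and finite colimits).  Moreover,
if `𝒞` is `R`-linearly symmetric monoidal, then `𝒞 ⊗_R S⁻¹R` is symmetric monoidal in a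
natural way and `F` is a monoidal functor. -/
theorem base_change_of_abelian_category_along_localization
    (R : Type u) [CommRing R] (S : Submonoid R)
    (C : Type v) [Category.{w} C] [Abelian C] [Linear R C] :
    Nonempty (Abelian (BaseChange R (Localization S) C)) ∧
    Nonempty (Limits.PreservesFiniteLimits (baseChangeFunctor R (Localization S) C)) ∧
    Nonempty (Limits.PreservesFiniteColimits (baseChangeFunctor R (Localization S) C)) ∧
    ∀ [MonoidalCategory C] [MonoidalPreadditive C] [SymmetricCategory C] [MonoidalLinear R C],
      ∃ m : MonoidalCategory (BaseChange R (Localization S) C),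
        ∃ _ : @SymmetricCategory _ _ m,
          Nonempty (@Functor.Monoidal C _ _ (BaseChange R (Localization S) C) _ m
            (baseChangeFunctor R (Localization S) C)) :=
  base_change_of_abelian_category_along_localization_general R S (Localization S) C
end

section
/- Let k be a perfect field of characteristic p > 0, W = W(k) its ring of Witt vectors, and W_n = W/p^nW. Let A be a smooth k-algebra (so X = Spec A is a smooth affine k-scheme). Then there exists a W-algebra B which is flat over W and p-adically complete, together with an isomorphism B ⊗_W k ≅ A of k-algebras, such that B/p^nB is a smooth W_n-algebra for every n ≥ 1; moreover such a B is unique up to isomorphism of W-algebras compatible with the identification modulo p. -/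
universe u

/-- The reduction `R/pⁿ → B/pⁿ` of a ring homomorphism `f : R → B`. -/
noncomputable def reduceModPn (p : ℕ) {R B : Type u} [CommRing R] [CommRing B]
    (f : R →+* B) (n : ℕ) :
    (R ⧸ Ideal.span {(p : R) ^ n}) →+* (B ⧸ Ideal.span {(p : B) ^ n}) :=
  Ideal.quotientMap _ f (Ideal.span_le.mpr (by
    simp only [Set.singleton_subset_iff, SetLike.mem_coe, Ideal.mem_comap, map_pow, map_natCast]
    exact Ideal.subset_span (Set.mem_singleton _)))

/-- A lift of a `k`-algebra `A` to a flat, `p`-adically complete `W(k)`-algebra `B` with an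
identification `B/pB ≅ A` (compatible with the residue map `W(k) → k`, given by the `0`-th
ghost component), such that every reduction `B/pⁿB` is a smooth `W(k)/pⁿ`-algebra. -/
structure WittLift (p : ℕ) [Fact p.Prime] (k : Type u) [Field k] [CharP k p] [PerfectRing k p]
    (A : Type u) [CommRing A] [Algebra k A] : Type (u + 1) where
  B : Type u
  [commRing : CommRing B]
  [alg : Algebra (WittVector p k) B]
  flat : Module.Flat (WittVector p k) B
  complete : IsAdicComplete (Ideal.span {(p : B)}) B
  equiv : (B ⧸ Ideal.span {(p : B)}) ≃+* A
  compat : ∀ w : WittVector p k,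
    equiv (Ideal.Quotient.mk _ (algebraMap (WittVector p k) B w)) =
      algebraMap k A (WittVector.ghostComponent 0 w)
  smooth : ∀ n : ℕ, 1 ≤ n →
    letI : Algebra (WittVector p k ⧸ Ideal.span {(p : WittVector p k) ^ n})
        (B ⧸ Ideal.span {(p : B) ^ n}) :=
      (reduceModPn p (algebraMap (WittVector p k) B) n).toAlgebra
    Algebra.Smooth (WittVector p k ⧸ Ideal.span {(p : WittVector p k) ^ n})
      (B ⧸ Ideal.span {(p : B) ^ n})

section
variable {p : ℕ} [Fact p.Prime] {k : Type u} [Field k] [CharP k p] [PerfectRing k p]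
    {A : Type u} [CommRing A] [Algebra k A]

instance (L : WittLift p k A) : CommRing L.B := L.commRing
instance (L : WittLift p k A) : Algebra (WittVector p k) L.B := L.alg

end

/-!
Write the special fibre as a quotient `A = S/J` of a polynomial ring `S` over the base, with
uniformizer `ϖ ∈ J`. Formal smoothness splits `S/(J² + (ϖ)) → A`, and the splitting lifts to an
endomorphism `φ` of `S` which is the identity modulo `J` and maps `J` into `J² + (ϖ)`, so that the
iterates of `φ` contract `J` towards `(ϖ)`. Let `T n` be the ideal of elements whose iterates tend
to `(ϖⁿ)` for the `J`-adic topology. Then `T 1 = J`, and by Artin–Rees `ϖ x ∈ T (n + 1)` if and only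
if `x ∈ T n`. Hence `B = lim S/T n` is `ϖ`-torsion-free and `ϖ`-adically complete, with
`B/ϖⁿ = S/T n`. No obstruction group is needed.

A flat `R/Iⁿ`-algebra is formally smooth as soon as its reduction modulo `I` is. This gives
smoothness of the reductions of `B`, and also maps of lifts in both directions over the identity of
`A`; their composites are the identity modulo `I`, hence bijective by completeness.
-/

open Filter

/-! ### Contractions of an ideal -/

lemma sup_pow_le_sup_pow {S : Type*} [CommRing S] (I K : Ideal S) (n : ℕ) :
    (I ⊔ K) ^ n ≤ I ⊔ K ^ n := by
  induction n with
  | zero => simp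
  | succ n ih =>
    calc (I ⊔ K) ^ (n + 1) ≤ (I ⊔ K ^ n) * (I ⊔ K) := by
          rw [pow_succ]; exact Ideal.mul_mono_left ih
      _ ≤ I ⊔ K ^ (n + 1) := by
          rw [Ideal.sup_mul, Ideal.mul_sup (K ^ n), ← pow_succ]
          exact sup_le (le_sup_of_le_left Ideal.mul_le_left)
            (sup_le_sup_right Ideal.mul_le_right _)

lemma exists_mem_pow_of_mul_mem_pow {S : Type*} [CommRing S] [IsNoetherianRing S] (J : Ideal S)
    {a : S} (ha : a ∈ nonZeroDivisors S) :
    ∃ c, ∀ j x, a * x ∈ J ^ (j + c) → x ∈ J ^ j := by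
  obtain ⟨c, hc⟩ := J.exists_pow_inf_eq_pow_smul (Ideal.span {a})
  refine ⟨c, fun j x hx ↦ ?_⟩
  have hmem : a * x ∈ J ^ (j + c) • (⊤ : Submodule S S) ⊓ Ideal.span {a} :=
    ⟨by simpa using hx, Ideal.mul_mem_right _ _ (Ideal.mem_span_singleton_self a)⟩
  rw [hc _ le_add_self, Nat.add_sub_cancel] at hmem
  obtain ⟨y, hy, hyx⟩ := Ideal.mem_mul_span_singleton.1
    (Submodule.smul_mono le_rfl inf_le_right hmem)
  rwa [← (mul_cancel_left_mem_nonZeroDivisors ha).1 ((mul_comm a y).trans hyx)]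

/-- An endomorphism `φ` contracting the ideal `J` towards the ideal of a fixed element `ϖ ∈ J`: it
is the identity modulo `J` and sends `J` into `J² + (ϖ)`. -/
structure IsContraction {S : Type*} [CommRing S] (ϖ : S) (J : Ideal S) (φ : S →+* S) :
    Prop where
  self_mem : ϖ ∈ J
  map_self : φ ϖ = ϖ
  apply_sub_mem (x : S) : φ x - x ∈ J
  map_le : J.map φ ≤ J ^ 2 ⊔ Ideal.span {ϖ}

/-- The ideal of elements whose iterates under `φ` tend to `(ϖⁿ)` for the `J`-adic topology. If `φ`
is a contraction, it is the kernel of `S → B/ϖⁿ` for a lift `B` of `S/J`. -/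
def contractedIdeal {S : Type*} [CommRing S] (ϖ : S) (J : Ideal S) (φ : S →+* S) (n : ℕ) :
    Ideal S where
  carrier := {x | ∀ j, ∀ᶠ m in atTop, (φ ^ m) x ∈ Ideal.span {ϖ ^ n} ⊔ J ^ j}
  add_mem' hx hy j := by
    filter_upwards [hx j, hy j] with m hxm hym
    rw [map_add]
    exact add_mem hxm hym
  zero_mem' j := by simp
  smul_mem' c x hx j := by
    filter_upwards [hx j] with m hxm
    rw [smul_eq_mul, map_mul]
    exact Ideal.mul_mem_left _ _ hxm

section
variable {S : Type*} [CommRing S] {ϖ : S} {J : Ideal S} {φ : S →+* S}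

lemma mem_contractedIdeal_of_pow_apply_mem {m n : ℕ} {x : S}
    (hx : (φ ^ m) x ∈ contractedIdeal ϖ J φ n) : x ∈ contractedIdeal ϖ J φ n := by
  intro j
  rw [← map_add_atTop_eq_nat m, eventually_map]
  filter_upwards [hx j] with l hl
  rwa [pow_add]

namespace IsContraction
variable (h : IsContraction ϖ J φ)
include h

lemma pow_map_self (m : ℕ) : (φ ^ m) ϖ = ϖ := by
  induction m with
  | zero => rfl
  | succ m ih => rw [pow_succ, RingHom.coe_mul, Function.comp_apply, h.map_self, ih]

lemma pow_apply_sub_mem (m : ℕ) (x : S) : (φ ^ m) x - x ∈ J := by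
  induction m with
  | zero => simp
  | succ m ih =>
    rw [pow_succ', RingHom.coe_mul, Function.comp_apply]
    simpa using add_mem (h.apply_sub_mem ((φ ^ m) x)) ih

lemma map_pow_le (m : ℕ) : J.map (φ ^ m) ≤ J ^ (m + 1) ⊔ Ideal.span {ϖ} := by
  induction m with
  | zero => simp [Ideal.map_id, RingHom.one_def]
  | succ m ih =>
    calc J.map (φ ^ (m + 1)) = (J.map φ).map (φ ^ m) := by
          rw [Ideal.map_map, pow_succ, RingHom.mul_def]
      _ ≤ (J ^ 2 ⊔ Ideal.span {ϖ}).map (φ ^ m) := Ideal.map_mono h.map_le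
      _ = J.map (φ ^ m) ^ 2 ⊔ Ideal.span {ϖ} := by
          rw [Ideal.map_sup, Ideal.map_pow, Ideal.map_span, Set.image_singleton, h.pow_map_self]
      _ ≤ (J ^ (m + 1)) ^ 2 ⊔ Ideal.span {ϖ} := by
          refine sup_le ((pow_le_pow_left' ih 2).trans ?_) le_sup_right
          rw [sup_comm, sup_comm (_ ^ 2)]
          exact sup_pow_le_sup_pow _ _ _
      _ ≤ J ^ (m + 1 + 1) ⊔ Ideal.span {ϖ} := by
          rw [← pow_mul]
          exact sup_le_sup_right (Ideal.pow_le_pow_right (by lia)) _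

lemma pow_le_contractedIdeal (n : ℕ) : J ^ n ≤ contractedIdeal ϖ J φ n := by
  intro x hx j
  filter_upwards [eventually_ge_atTop j] with m hm
  have hφx : (φ ^ m) x ∈ Ideal.map (φ ^ m) J ^ n := by
    rw [← Ideal.map_pow]
    exact Ideal.mem_map_of_mem _ hx
  have hle : J ^ (m + 1) ≤ J ^ j := Ideal.pow_le_pow_right (by lia)
  rw [sup_comm, ← Ideal.span_singleton_pow]
  exact sup_le_sup_right hle _
    (sup_pow_le_sup_pow _ _ _ (Ideal.pow_right_mono (h.map_pow_le m) n hφx))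

lemma contractedIdeal_one : contractedIdeal ϖ J φ 1 = J := by
  refine le_antisymm (fun x hx ↦ ?_) (by simpa using h.pow_le_contractedIdeal 1)
  obtain ⟨m, hm⟩ := (hx 1).exists
  have hmJ : (φ ^ m) x ∈ J := by
    refine (sup_le ?_ ?_ : Ideal.span {ϖ ^ 1} ⊔ J ^ 1 ≤ J) hm
    · simpa [Ideal.span_singleton_le_iff_mem] using h.self_mem
    · rw [pow_one]
  simpa using sub_mem hmJ (h.pow_apply_sub_mem m x)

lemma contractedIdeal_le_sup (n : ℕ) :
    contractedIdeal ϖ J φ n ≤ contractedIdeal ϖ J φ (n + 1) ⊔ Ideal.span {ϖ ^ n} := by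
  intro x hx
  obtain ⟨m, hm⟩ := (hx (n + 1)).exists
  obtain ⟨z, b, hb, hzb⟩ := Ideal.mem_span_singleton_sup.1 hm
  have hpow : (φ ^ m) (x - z * ϖ ^ n) ∈ J ^ (n + 1) := by
    have hz : ϖ ^ n * ((φ ^ m) z - z) ∈ J ^ (n + 1) := by
      rw [pow_succ]
      exact Ideal.mul_mem_mul (Ideal.pow_mem_pow h.self_mem n) (h.pow_apply_sub_mem m z)
    convert sub_mem hb hz using 1
    rw [map_sub, map_mul, map_pow, h.pow_map_self, ← hzb]
    ring
  rw [sup_comm]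
  exact Ideal.mem_span_singleton_sup.2 ⟨z, _, mem_contractedIdeal_of_pow_apply_mem
    (h.pow_le_contractedIdeal _ hpow), by ring⟩

lemma mul_mem_contractedIdeal_iff [IsNoetherianRing S] (hϖ : ϖ ∈ nonZeroDivisors S) {n : ℕ}
    {x : S} : ϖ * x ∈ contractedIdeal ϖ J φ (n + 1) ↔ x ∈ contractedIdeal ϖ J φ n := by
  constructor <;> intro hx j
  · obtain ⟨c, hc⟩ := exists_mem_pow_of_mul_mem_pow J hϖ
    filter_upwards [hx (j + c)] with m hm
    obtain ⟨z, b, hb, hzb⟩ := Ideal.mem_span_singleton_sup.1 hm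
    rw [map_mul, h.pow_map_self] at hzb
    refine Ideal.mem_span_singleton_sup.2 ⟨z, (φ ^ m) x - z * ϖ ^ n, hc _ _ ?_, by ring⟩
    convert hb using 1
    linear_combination -hzb
  · filter_upwards [hx j] with m hm
    obtain ⟨z, b, hb, hzb⟩ := Ideal.mem_span_singleton_sup.1 hm
    rw [map_mul, h.pow_map_self, ← hzb]
    exact Ideal.mem_span_singleton_sup.2 ⟨z, ϖ * b, Ideal.mul_mem_left _ _ hb, by ring⟩

end IsContraction
end

/-! ### Limits of adic towers -/

/-- Ideals `T n` that behave like the kernels of `S → B/ϖⁿ` for a `ϖ`-torsion-free `S`-algebra `B`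
with `S → B/ϖ` surjective; `B` is recovered as `towerLimit T`. -/
structure IsAdicTower {S : Type*} [CommRing S] (ϖ : S) (T : ℕ → Ideal S) : Prop where
  zero : T 0 = ⊤
  le_sup (n : ℕ) : T n ≤ T (n + 1) ⊔ Ideal.span {ϖ ^ n}
  mul_mem_iff {n : ℕ} {x : S} : ϖ * x ∈ T (n + 1) ↔ x ∈ T n

/-- The limit of the quotients `S/T n`. Coherence is expressed by common representatives, so that
it makes sense without assuming `T` decreasing. -/
def towerLimit {S : Type*} [CommRing S] (T : ℕ → Ideal S) : Subalgebra S (∀ n, S ⧸ T n) where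
  carrier := {b | ∀ n, ∃ x, ∀ m ≤ n, Ideal.Quotient.mk (T m) x = b m}
  mul_mem' ha hb n := by
    obtain ⟨x, hx⟩ := ha n
    obtain ⟨y, hy⟩ := hb n
    exact ⟨x * y, fun m hm ↦ by simp [hx m hm, hy m hm]⟩
  add_mem' ha hb n := by
    obtain ⟨x, hx⟩ := ha n
    obtain ⟨y, hy⟩ := hb n
    exact ⟨x + y, fun m hm ↦ by simp [hx m hm, hy m hm]⟩
  algebraMap_mem' x _ := ⟨x, fun _ _ ↦ rfl⟩

namespace towerLimit
variable {S : Type*} [CommRing S] (T : ℕ → Ideal S)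

/-- The projection of `towerLimit T` onto its `n`-th component `S/T n`. -/
def eval (n : ℕ) : towerLimit T →ₐ[S] S ⧸ T n :=
  (Pi.evalAlgHom S (fun n ↦ S ⧸ T n) n).comp (towerLimit T).val

variable {T}

lemma ext {b c : towerLimit T} (h : ∀ n, eval T n b = eval T n c) : b = c :=
  Subtype.ext (funext h)

lemma exists_mk_eq_eval (b : towerLimit T) (n : ℕ) :
    ∃ x, ∀ m ≤ n, Ideal.Quotient.mk (T m) x = eval T m b :=
  b.2 n

lemma exists_eval_eq {y : ∀ n, S ⧸ T n}
    (hy : ∀ n, ∃ x, ∀ m ≤ n, Ideal.Quotient.mk (T m) x = y m) :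
    ∃ b : towerLimit T, ∀ n, eval T n b = y n :=
  ⟨⟨y, hy⟩, fun _ ↦ rfl⟩

lemma eval_algebraMap (n : ℕ) (x : S) :
    eval T n (algebraMap S (towerLimit T) x) = Ideal.Quotient.mk (T n) x :=
  rfl

lemma eval_surjective (n : ℕ) : Function.Surjective (eval T n) :=
  fun y ↦ (Ideal.Quotient.mk_surjective y).imp' (algebraMap S _) fun _ ↦ id

end towerLimit

namespace IsAdicTower
open towerLimit
variable {S : Type*} [CommRing S] {ϖ : S} {T : ℕ → Ideal S} (h : IsAdicTower ϖ T)
include h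

lemma antitone : Antitone T :=
  antitone_nat_of_succ_le fun _ _ hx ↦ h.mul_mem_iff.1 (Ideal.mul_mem_left _ _ hx)

lemma pow_mul_mem_iff {n m : ℕ} {x : S} : ϖ ^ n * x ∈ T (n + m) ↔ x ∈ T m := by
  induction n generalizing x with
  | zero => simp
  | succ n ih => rw [pow_succ', mul_assoc, add_right_comm, h.mul_mem_iff, ih]

lemma le_add_sup (n m : ℕ) : T n ≤ T (n + m) ⊔ Ideal.span {ϖ ^ n} := by
  induction m with
  | zero => exact le_sup_left
  | succ m ih =>
    refine ih.trans (sup_le ((h.le_sup (n + m)).trans (sup_le_sup_left ?_ _)) le_sup_right)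
    exact Ideal.span_singleton_le_span_singleton.2 (pow_dvd_pow ϖ (Nat.le_add_right n m))

lemma self_pow_mem (n : ℕ) : ϖ ^ n ∈ T n := by
  rw [← mul_one (ϖ ^ n)]
  exact h.pow_mul_mem_iff (m := 0).2 (by simp [h.zero])

lemma algebraMap_mem_nonZeroDivisors :
    algebraMap S (towerLimit T) ϖ ∈ nonZeroDivisors (towerLimit T) := by
  refine mem_nonZeroDivisors_iff_left.2 fun b hb ↦ ext fun n ↦ ?_
  obtain ⟨x, hx⟩ := exists_mk_eq_eval b (n + 1)
  have hϖx : ϖ * x ∈ T (n + 1) := by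
    rw [← Ideal.Quotient.eq_zero_iff_mem, map_mul, hx _ le_rfl, ← eval_algebraMap, ← map_mul, hb,
      map_zero]
  rw [← hx n n.le_succ, map_zero, Ideal.Quotient.eq_zero_iff_mem]
  exact h.mul_mem_iff.1 hϖx

lemma exists_mul_pow_eq_of_eval_eq_zero {n : ℕ} {b : towerLimit T} (hb : eval T n b = 0) :
    ∃ c, c * algebraMap S (towerLimit T) ϖ ^ n = b := by
  choose x hx using fun m ↦ exists_mk_eq_eval b (n + m)
  have hxT (m : ℕ) : x m ∈ Ideal.span {ϖ ^ n} ⊔ T (n + m) := by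
    rw [sup_comm]
    refine h.le_add_sup n m (Ideal.Quotient.eq_zero_iff_mem.1 ?_)
    rw [hx m n (Nat.le_add_right n m), hb]
  choose y t ht hyt using fun m ↦ Ideal.mem_span_singleton_sup.1 (hxT m)
  have hy {i m : ℕ} (him : i ≤ n + m) : Ideal.Quotient.mk (T i) (y m * ϖ ^ n) = eval T i b := by
    rw [← hx m i him, ← hyt m, map_add, Ideal.Quotient.eq_zero_iff_mem.2 (h.antitone him (ht m)),
      add_zero]
  have hy_coherent {l m : ℕ} (hlm : l ≤ m) : y m - y l ∈ T l := by
    rw [← h.pow_mul_mem_iff (n := n), mul_comm, sub_mul, ← Ideal.Quotient.eq, hy (by lia),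
      hy le_rfl]
  obtain ⟨c, hc⟩ := exists_eval_eq (T := T) (y := fun m ↦ Ideal.Quotient.mk (T m) (y m))
    fun m ↦ ⟨y m, fun l hlm ↦ Ideal.Quotient.eq.2 (hy_coherent hlm)⟩
  refine ⟨c, ext fun m ↦ ?_⟩
  rw [map_mul, hc, ← map_pow, eval_algebraMap, ← map_mul, hy (by lia)]

lemma ker_eval (n : ℕ) :
    RingHom.ker (eval T n) = Ideal.span {algebraMap S (towerLimit T) ϖ} ^ n := by
  rw [Ideal.span_singleton_pow]
  refine le_antisymm (fun b hb ↦ Ideal.mem_span_singleton'.2 ?_)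
    ((Ideal.span_singleton_le_iff_mem _).2 ?_)
  · exact h.exists_mul_pow_eq_of_eval_eq_zero hb
  · rw [RingHom.mem_ker, ← map_pow, eval_algebraMap, Ideal.Quotient.eq_zero_iff_mem]
    exact h.self_pow_mem n

lemma isAdicComplete_towerLimit :
    IsAdicComplete (Ideal.span {algebraMap S (towerLimit T) ϖ}) (towerLimit T) where
  haus' b hb := ext fun n ↦ by
    simpa [SModEq.zero, ← h.ker_eval] using hb n
  prec' f hf := by
    simp only [smul_eq_mul, Ideal.mul_top, ← h.ker_eval, SModEq.sub_mem,
      RingHom.sub_mem_ker_iff] at hf ⊢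
    obtain ⟨L, hL⟩ := exists_eval_eq (T := T) (y := fun n ↦ eval T n (f n)) fun n ↦
      (exists_mk_eq_eval (f n) n).imp fun x hx m hm ↦ (hx m hm).trans (hf hm).symm
    exact ⟨L, fun n ↦ (hL n).symm⟩

end IsAdicTower

/-! ### Smoothness modulo powers of an ideal -/

lemma exists_lift_of_formallySmooth {S X Y Z : Type*} [CommRing S] [CommRing X] [CommRing Y]
    [CommRing Z] {h : S →+* X} (hh : h.FormallySmooth) {π : Y →+* Z} (hπ : Function.Surjective π)
    (hker : IsNilpotent (RingHom.ker π)) (f : X →+* Z) (σ : S →+* Y) (hf : f.comp h = π.comp σ) :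
    ∃ g : X →+* Y, π.comp g = f ∧ g.comp h = σ := by
  algebraize [h, σ, π.comp σ]
  let fₐ : X →ₐ[S] Z := { f with commutes' := RingHom.congr_fun hf }
  let πₐ : Y →ₐ[S] Z := { π with commutes' := fun _ ↦ rfl }
  exact ⟨Algebra.FormallySmooth.liftOfSurjective fₐ πₐ hπ hker,
    RingHom.ext (Algebra.FormallySmooth.liftOfSurjective_apply fₐ πₐ hπ hker),
    AlgHom.comp_algebraMap _⟩

section
variable {R B : Type*} [CommRing R] [CommRing B] [Algebra R B]

lemma flat_quotient_map [Module.Flat R B] (I : Ideal R) :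
    Module.Flat (R ⧸ I) (B ⧸ I.map (algebraMap R B)) :=
  .of_linearEquiv (Algebra.TensorProduct.quotIdealMapEquivQuotTensor B I).toLinearEquiv

lemma formallySmooth_quotient_map_of_sq_le [Module.Flat R B] {I K : Ideal R} (hIK : I ≤ K)
    (hKI : K ^ 2 ≤ I) (hK : Algebra.FormallySmooth (R ⧸ K) (B ⧸ K.map (algebraMap R B))) :
    Algebra.FormallySmooth (R ⧸ I) (B ⧸ I.map (algebraMap R B)) := by
  rw [← RingHom.formallySmooth_algebraMap] at hK ⊢
  refine .of_flat_of_ker_eq_map_of_square_zero _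
    (RingHom.flat_algebraMap_iff.2 (flat_quotient_map I))
    (Ideal.Quotient.factor hIK) (Ideal.Quotient.factor (Ideal.map_mono hIK)) _
    (Ideal.Quotient.factor_surjective _) (Ideal.Quotient.factor_surjective _)
    (Ideal.Quotient.ringHom_ext rfl) ?_ ?_ hK
  · rw [Ideal.Quotient.factor_ker, ← Ideal.map_pow, Ideal.map_eq_bot_iff_le_ker, Ideal.mk_ker]
    exact hKI
  · rw [Ideal.Quotient.factor_ker, Ideal.Quotient.factor_ker, Ideal.map_map, Ideal.map_map]
    rfl

lemma formallySmooth_quotient_map_pow [Module.Flat R B] {I : Ideal R}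
    (hI : Algebra.FormallySmooth (R ⧸ I) (B ⧸ I.map (algebraMap R B))) (n : ℕ) :
    Algebra.FormallySmooth (R ⧸ I ^ (n + 1)) (B ⧸ (I ^ (n + 1)).map (algebraMap R B)) := by
  induction n with
  | zero =>
    exact formallySmooth_quotient_map_of_sq_le (by simp) (by simp [Ideal.pow_le_self]) hI
  | succ n ih =>
    refine formallySmooth_quotient_map_of_sq_le (Ideal.pow_le_pow_right (by lia)) ?_ ih
    rw [← pow_mul]
    exact Ideal.pow_le_pow_right (by lia)

end

lemma sup_pow_smul_top_eq_top {R M : Type*} [CommRing R] [AddCommGroup M] [Module R M]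
    {I : Ideal R} {N : Submodule R M} (h : N ⊔ I • ⊤ = ⊤) (n : ℕ) : N ⊔ I ^ n • ⊤ = ⊤ := by
  induction n with
  | zero => simp
  | succ n ih =>
    refine top_unique ?_
    calc ⊤ = N ⊔ I • (N ⊔ I ^ n • ⊤) := by rw [ih, h]
      _ ≤ N ⊔ I ^ (n + 1) • ⊤ := by
        rw [Submodule.smul_sup, ← Submodule.mul_smul, ← pow_succ', ← sup_assoc]
        exact sup_le_sup_right (sup_le le_rfl Submodule.smul_le_right) _

/-- The flat `R`-algebra `B`, complete for the ideal `I = ker q`, is a lift of the `k`-algebra `A`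
along `q : R → k`: the map `f` identifies `B/IB` with `A`. -/
structure IsAdicLift {R k B A : Type*} [CommRing R] [CommRing k] [CommRing B] [CommRing A]
    [Algebra R B] [Algebra k A] (q : R →+* k) (f : B →+* A) : Prop where
  flat : Module.Flat R B
  complete : IsAdicComplete (RingHom.ker q) B
  surjective : Function.Surjective f
  ker_eq : RingHom.ker f = (RingHom.ker q).map (algebraMap R B)
  comp_algebraMap : f.comp (algebraMap R B) = (algebraMap k A).comp q

lemma exists_surjective_eval₂Hom {R A : Type*} [CommRing R] [CommRing A] {ρ : R →+* A}
    (hρ : ρ.FiniteType) :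
    ∃ (n : ℕ) (x : Fin n → A), Function.Surjective (MvPolynomial.eval₂Hom ρ x) := by
  algebraize [ρ]
  obtain ⟨n, g, hg⟩ := Algebra.FiniteType.iff_quotient_mvPolynomial''.1 ‹Algebra.FiniteType R A›
  refine ⟨n, g ∘ MvPolynomial.X, ?_⟩
  rw [MvPolynomial.aeval_unique g] at hg
  exact hg

namespace IsAdicLift
variable {R k B A : Type*} [CommRing R] [CommRing k] [CommRing B] [CommRing A]
    [Algebra R B] [Algebra k A] {q : R →+* k} {f : B →+* A}

/-- The identification `B/IB ≃ A` given by a lift `B` of `A`, where `I = ker q`. -/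
noncomputable def quotientEquiv (h : IsAdicLift q f) :
    (B ⧸ (RingHom.ker q).map (algebraMap R B)) ≃+* A :=
  (Ideal.quotEquivOfEq h.ker_eq.symm).trans (RingHom.quotientKerEquivOfSurjective h.surjective)

lemma formallySmooth_quotient_pow [Algebra.FormallySmooth k A] (hq : Function.Surjective q)
    (h : IsAdicLift q f) (n : ℕ) :
    Algebra.FormallySmooth (R ⧸ RingHom.ker q ^ (n + 1))
      (B ⧸ (RingHom.ker q ^ (n + 1)).map (algebraMap R B)) := by
  have := h.flat
  refine formallySmooth_quotient_map_pow (RingHom.formallySmooth_algebraMap.1 ?_) n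
  have hcomp : algebraMap (R ⧸ RingHom.ker q) (B ⧸ (RingHom.ker q).map (algebraMap R B)) =
      (h.quotientEquiv.symm : A →+* _).comp
        ((algebraMap k A).comp (RingHom.quotientKerEquivOfSurjective hq)) := by
    refine Ideal.Quotient.ringHom_ext (RingHom.ext fun r ↦ ?_)
    exact (h.quotientEquiv.symm_apply_eq.2 (RingHom.congr_fun h.comp_algebraMap r).symm).symm
  rw [hcomp]
  exact ((RingHom.FormallySmooth.of_bijective (RingEquiv.bijective _)).comp
    (RingHom.formallySmooth_algebraMap.2 inferInstance)).comp
      (.of_bijective (RingEquiv.bijective _))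

lemma finiteType_quotient_pow [Algebra.FiniteType k A] (hq : Function.Surjective q)
    (h : IsAdicLift q f) (n : ℕ) :
    Algebra.FiniteType R (B ⧸ (RingHom.ker q ^ n).map (algebraMap R B)) := by
  obtain ⟨r, x, hx⟩ := exists_surjective_eval₂Hom (ρ := (algebraMap k A).comp q)
    ((RingHom.finiteType_algebraMap.2 inferInstance).comp (.of_surjective q hq))
  choose y hy using h.surjective
  let g : MvPolynomial (Fin r) R →ₐ[R] B := MvPolynomial.aeval (y ∘ x)
  have hfg : f.comp g.toRingHom = MvPolynomial.eval₂Hom ((algebraMap k A).comp q) x := by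
    refine MvPolynomial.ringHom_ext (fun a ↦ ?_) fun i ↦ ?_
    · simpa [g] using RingHom.congr_fun h.comp_algebraMap a
    · simp [g, hy]
  have hsup : LinearMap.range g.toLinearMap ⊔ RingHom.ker q • (⊤ : Submodule R B) = ⊤ := by
    refine top_unique fun b _ ↦ ?_
    obtain ⟨a, ha⟩ := hx (f b)
    rw [← hfg] at ha
    rw [Ideal.smul_top_eq_map, ← h.ker_eq, ← sub_add_cancel b (g a), add_comm]
    refine Submodule.add_mem_sup ⟨a, rfl⟩ ?_
    exact (RingHom.sub_mem_ker_iff f).2 ha.symm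
  refine .of_surjective ((Ideal.Quotient.mkₐ R _).comp g) fun b ↦ ?_
  obtain ⟨b, rfl⟩ := Ideal.Quotient.mk_surjective b
  have hb : b ∈ LinearMap.range g.toLinearMap ⊔ RingHom.ker q ^ n • (⊤ : Submodule R B) := by
    rw [sup_pow_smul_top_eq_top hsup]; trivial
  obtain ⟨_, ⟨a, rfl⟩, c, hc, rfl⟩ := Submodule.mem_sup.1 hb
  refine ⟨a, Ideal.Quotient.eq.2 ?_⟩
  rw [Ideal.smul_top_eq_map] at hc
  simpa using hc

lemma smooth_quotient_pow [IsNoetherianRing R] [Algebra.Smooth k A] (hq : Function.Surjective q)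
    (h : IsAdicLift q f) (n : ℕ) :
    Algebra.Smooth (R ⧸ RingHom.ker q ^ (n + 1))
      (B ⧸ (RingHom.ker q ^ (n + 1)).map (algebraMap R B)) := by
  have := h.finiteType_quotient_pow hq (n + 1)
  have : Algebra.FiniteType (R ⧸ RingHom.ker q ^ (n + 1))
    (B ⧸ (RingHom.ker q ^ (n + 1)).map (algebraMap R B)) := .of_restrictScalars_finiteType R _ _
  exact ⟨h.formallySmooth_quotient_pow hq n, Algebra.FinitePresentation.of_finiteType.1 this⟩

end IsAdicLift

/-! ### Uniqueness of adic lifts -/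

section
variable {R B C : Type*} [CommRing R] [CommRing B] [CommRing C] [Algebra R B] [Algebra R C]

lemma exists_algHom_lift_of_map_eq_bot {D : Type*} [CommRing D] [Algebra R D] {K : Ideal R}
    (hB : Algebra.FormallySmooth (R ⧸ K) (B ⧸ K.map (algebraMap R B)))
    (hK : K.map (algebraMap R C) = ⊥) {π : C →ₐ[R] D} (hπ : Function.Surjective π)
    (hker : IsNilpotent (RingHom.ker π)) (f : B →ₐ[R] D) :
    ∃ g : B →ₐ[R] C, π.comp g = f := by
  have hfK : K.map (algebraMap R B) ≤ RingHom.ker f.toRingHom := by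
    rw [← Ideal.map_eq_bot_iff_le_ker, Ideal.map_map]
    calc K.map (f.toRingHom.comp (algebraMap R B))
        = (K.map (algebraMap R C)).map π.toRingHom := by
          rw [Ideal.map_map]
          congr 1
          exact f.comp_algebraMap.trans π.comp_algebraMap.symm
      _ = ⊥ := by rw [hK, Ideal.map_bot]
  have hσ : ∀ r ∈ K, algebraMap R C r = 0 := fun r hr ↦ by
    simpa [hK] using Ideal.mem_map_of_mem (algebraMap R C) hr
  obtain ⟨g, hπg, hgσ⟩ := exists_lift_of_formallySmooth (RingHom.formallySmooth_algebraMap.2 hB)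
    (π := π.toRingHom) hπ hker (Ideal.Quotient.lift _ f.toRingHom hfK)
    (Ideal.Quotient.lift K (algebraMap R C) hσ)
    (Ideal.Quotient.ringHom_ext (f.comp_algebraMap.trans π.comp_algebraMap.symm))
  refine ⟨⟨g.comp (Ideal.Quotient.mk _), fun r ↦ ?_⟩, AlgHom.ext fun b ↦ ?_⟩
  · exact RingHom.congr_fun hgσ (Ideal.Quotient.mk K r)
  · exact RingHom.congr_fun hπg (Ideal.Quotient.mk _ b)

lemma exists_algHom_lift_quotient_pow_succ {I : Ideal R} {n : ℕ}
    (hB : Algebra.FormallySmooth (R ⧸ I ^ (n + 1)) (B ⧸ (I ^ (n + 1)).map (algebraMap R B)))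
    {J : Ideal C} (hJ : I.map (algebraMap R C) = J) (hn : n ≠ 0) (f : B →ₐ[R] C ⧸ J ^ n) :
    ∃ g : B →ₐ[R] C ⧸ J ^ (n + 1),
      (Ideal.Quotient.factorₐ R (Ideal.pow_le_pow_right n.le_succ : J ^ (n + 1) ≤ J ^ n)).comp g =
        f := by
  have hle : J ^ (n + 1) ≤ J ^ n := Ideal.pow_le_pow_right n.le_succ
  refine exists_algHom_lift_of_map_eq_bot hB ?_ (Ideal.Quotient.factor_surjective hle) ⟨2, ?_⟩ f
  · rw [IsScalarTower.algebraMap_eq R C, ← Ideal.map_map, Ideal.map_pow, hJ]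
    exact Ideal.map_quotient_self _
  · change RingHom.ker (Ideal.Quotient.factor hle) ^ 2 = ⊥
    rw [Ideal.Quotient.factor_ker, ← Ideal.map_pow, ← pow_mul, Ideal.map_eq_bot_iff_le_ker,
      Ideal.mk_ker]
    exact Ideal.pow_le_pow_right (by lia)

theorem exists_algHom_lift_of_isAdicComplete {I : Ideal R}
    (hB : ∀ n, Algebra.FormallySmooth (R ⧸ I ^ (n + 1)) (B ⧸ (I ^ (n + 1)).map (algebraMap R B)))
    {J : Ideal C} (hJ : I.map (algebraMap R C) = J) [IsAdicComplete J C] (f : B →ₐ[R] C ⧸ J) :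
    ∃ F : B →ₐ[R] C, ∀ b, Ideal.Quotient.mk J (F b) = f b := by
  choose next hnext using fun n ↦
    exists_algHom_lift_quotient_pow_succ (C := C) (hB (n + 1)) hJ n.succ_ne_zero
  have hJ_le : J ≤ J ^ (0 + 1) := by simp
  let lifts (n : ℕ) : B →ₐ[R] C ⧸ J ^ (n + 1) :=
    n.rec ((Ideal.Quotient.factorₐ R hJ_le).comp f) next
  have hmono : StrictMono fun n : ℕ ↦ n + 1 := strictMono_id.add_const 1
  let F : B →+* C := IsAdicComplete.StrictMono.liftRingHom J hmono (fun n ↦ (lifts n).toRingHom)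
    fun {n} ↦ congrArg AlgHom.toRingHom (hnext n (lifts n))
  have hF (n : ℕ) (b : B) : Ideal.Quotient.mk (J ^ (n + 1)) (F b) = lifts n b :=
    IsAdicComplete.StrictMono.mk_liftRingHom J hmono _ _ b
  refine ⟨⟨F, fun r ↦ ?_⟩, fun b ↦ ?_⟩
  · refine congrFun
      (IsHausdorff.StrictMono.funext' J (f := F ∘ algebraMap R B) hmono fun n r ↦ ?_) r
    exact (hF n _).trans ((lifts n).commutes r)
  · obtain ⟨c, hc⟩ := Ideal.Quotient.mk_surjective (f b)
    have h1 : Ideal.Quotient.mk (J ^ (0 + 1)) (F b) = Ideal.Quotient.mk _ c :=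
      (hF 0 b).trans (congrArg (Ideal.Quotient.factorₐ R hJ_le) hc.symm)
    rw [← hc, Ideal.Quotient.eq]
    simpa [Ideal.Quotient.eq] using h1

end

lemma injective_of_sub_mem_smul_top {R M : Type*} [CommRing R] [AddCommGroup M] [Module R M]
    (I : Ideal R) [IsHausdorff I M] {θ : M →ₗ[R] M}
    (hθ : ∀ x, θ x - x ∈ (I • ⊤ : Submodule R M)) : Function.Injective θ := by
  have hmap (n : ℕ) :
      (I ^ n • ⊤ : Submodule R M).map (θ - LinearMap.id) ≤ I ^ (n + 1) • ⊤ := by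
    rw [Submodule.map_smul'', pow_succ, Submodule.mul_smul]
    refine Submodule.smul_mono le_rfl ?_
    rintro _ ⟨x, -, rfl⟩
    exact hθ x
  refine (injective_iff_map_eq_zero θ).2 fun x hx ↦ IsHausdorff.haus (I := I) ‹_› x fun n ↦ ?_
  rw [SModEq.zero]
  induction n with
  | zero => simp
  | succ n ih => simpa [hx] using hmap n (Submodule.mem_map_of_mem ih)

namespace IsAdicLift
variable {R k A B₁ B₂ : Type*} [CommRing R] [CommRing k] [CommRing A] [Algebra k A]
  [CommRing B₁] [CommRing B₂] [Algebra R B₁] [Algebra R B₂] {q : R →+* k}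
  {f₁ : B₁ →+* A} {f₂ : B₂ →+* A}

lemma mem_smul_top_iff (h₁ : IsAdicLift q f₁) {b : B₁} :
    b ∈ RingHom.ker q • (⊤ : Submodule R B₁) ↔ f₁ b = 0 := by
  rw [Ideal.smul_top_eq_map, ← h₁.ker_eq]
  rfl

lemma exists_algHom [Algebra.FormallySmooth k A] (hq : Function.Surjective q)
    (h₁ : IsAdicLift q f₁) (h₂ : IsAdicLift q f₂) :
    ∃ F : B₁ →ₐ[R] B₂, ∀ b, f₂ (F b) = f₁ b := by
  let g : B₁ →ₐ[R] B₂ ⧸ (RingHom.ker q).map (algebraMap R B₂) :=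
    { (h₂.quotientEquiv.symm : A →+* _).comp f₁ with
      commutes' r := h₂.quotientEquiv.symm_apply_eq.2 <| RingHom.congr_fun
        (h₁.comp_algebraMap.trans h₂.comp_algebraMap.symm) r }
  have := (IsAdicComplete.map_algebraMap_iff (S := B₂) _ _).2 h₂.complete
  obtain ⟨F, hF⟩ := exists_algHom_lift_of_isAdicComplete (h₁.formallySmooth_quotient_pow hq) rfl g
  exact ⟨F, fun b ↦ h₂.quotientEquiv.eq_symm_apply.1 (hF b)⟩

lemma bijective_of_comp_eq (h₁ : IsAdicLift q f₁) (h₂ : IsAdicLift q f₂) {F : B₁ →ₐ[R] B₂}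
    {G : B₂ →ₐ[R] B₁} (hF : ∀ b, f₂ (F b) = f₁ b) (hG : ∀ b, f₁ (G b) = f₂ b) :
    Function.Bijective F := by
  have := h₁.complete
  have := h₂.complete
  constructor
  · refine .of_comp (f := G) (injective_of_sub_mem_smul_top (RingHom.ker q)
      (θ := (G.comp F).toLinearMap) fun b ↦ h₁.mem_smul_top_iff.2 ?_)
    simp [hF, hG]
  · refine surjective_of_mkQ_comp_surjective (I := RingHom.ker q) (f := F.toLinearMap) fun b ↦ ?_
    obtain ⟨b, rfl⟩ := Submodule.mkQ_surjective _ b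
    refine ⟨G b, (Submodule.Quotient.eq _).2 (h₂.mem_smul_top_iff.2 ?_)⟩
    simp [hF, hG]

theorem exists_algEquiv [Algebra.FormallySmooth k A] (hq : Function.Surjective q)
    (h₁ : IsAdicLift q f₁) (h₂ : IsAdicLift q f₂) :
    ∃ e : B₁ ≃ₐ[R] B₂, ∀ b, f₂ (e b) = f₁ b := by
  obtain ⟨F, hF⟩ := h₁.exists_algHom hq h₂
  obtain ⟨G, hG⟩ := h₂.exists_algHom hq h₁
  exact ⟨.ofBijective F (h₁.bijective_of_comp_eq h₂ hF hG), hF⟩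

end IsAdicLift

/-! ### Existence of adic lifts -/

lemma IsContraction.isAdicTower {S : Type*} [CommRing S] [IsNoetherianRing S] {ϖ : S} {J : Ideal S}
    {φ : S →+* S} (h : IsContraction ϖ J φ) (hϖ : ϖ ∈ nonZeroDivisors S) :
    IsAdicTower ϖ (contractedIdeal ϖ J φ) where
  zero := top_unique (by simpa using h.pow_le_contractedIdeal 0)
  le_sup := h.contractedIdeal_le_sup
  mul_mem_iff := h.mul_mem_contractedIdeal_iff hϖ

lemma exists_section_of_formallySmooth {R k A P : Type*} [CommRing R] [CommRing k] [CommRing A]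
    [CommRing P] [Algebra k A] [Algebra.FormallySmooth k A] {q : R →+* k}
    (hq : Function.Surjective q) {c : R →+* P} {g : P →+* A} (hg : Function.Surjective g)
    (hgc : g.comp c = (algebraMap k A).comp q) {K : Ideal P} (hKg : K ≤ RingHom.ker g)
    (hgK : RingHom.ker g ^ 2 ≤ K) (hqK : (RingHom.ker q).map c ≤ K) :
    ∃ s : A →+* P ⧸ K, (Ideal.Quotient.lift K g hKg).comp s = RingHom.id A ∧
      s.comp (g.comp c) = (Ideal.Quotient.mk K).comp c := by
  have hker : RingHom.ker q ≤ RingHom.ker ((Ideal.Quotient.mk K).comp c) := by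
    rwa [← RingHom.comap_ker, Ideal.mk_ker, ← Ideal.map_le_iff_le_comap]
  let σ : k →+* P ⧸ K := q.liftOfSurjective hq ⟨_, hker⟩
  have hσ : σ.comp q = (Ideal.Quotient.mk K).comp c := q.liftOfRightInverse_comp _ _ _
  have hnil : IsNilpotent (RingHom.ker (Ideal.Quotient.lift K g hKg)) := by
    refine ⟨2, ?_⟩
    rwa [Ideal.ker_quotient_lift, ← Ideal.map_pow, Ideal.zero_eq_bot, Ideal.map_eq_bot_iff_le_ker,
      Ideal.mk_ker]
  have hgσ : (RingHom.id A).comp (algebraMap k A) = (Ideal.Quotient.lift K g hKg).comp σ := by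
    rw [← RingHom.cancel_right hq, RingHom.comp_assoc, RingHom.comp_assoc, hσ, ← hgc]
    rfl
  obtain ⟨s, hgs, hsσ⟩ := exists_lift_of_formallySmooth
    (RingHom.formallySmooth_algebraMap.2 inferInstance)
    (Ideal.Quotient.lift_surjective_of_surjective K hKg hg) hnil (RingHom.id A) σ hgσ
  exact ⟨s, hgs, by rw [hgc, ← RingHom.comp_assoc, hsσ, hσ]⟩

open MvPolynomial in
lemma exists_isContraction_of_formallySmooth {R k A ι : Type*} [CommRing R] [CommRing k]
    [CommRing A] [Algebra k A] [Algebra.FormallySmooth k A] {q : R →+* k}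
    (hq : Function.Surjective q) {ϖ : R} (hϖ : RingHom.ker q = Ideal.span {ϖ})
    {g : MvPolynomial ι R →+* A} (hg : Function.Surjective g)
    (hgC : g.comp C = (algebraMap k A).comp q) :
    ∃ φ, IsContraction (C ϖ) (RingHom.ker g) φ := by
  have hCϖ : C ϖ ∈ RingHom.ker g := by
    rw [← Ideal.mem_comap, RingHom.comap_ker, hgC, ← RingHom.comap_ker]
    exact Ideal.ker_le_comap q (hϖ ▸ Ideal.mem_span_singleton_self ϖ)
  let K := RingHom.ker g ^ 2 ⊔ Ideal.span {C ϖ}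
  have hKg : K ≤ RingHom.ker g :=
    sup_le (Ideal.pow_le_self two_ne_zero) ((Ideal.span_singleton_le_iff_mem _).2 hCϖ)
  obtain ⟨s, hgs, hsC⟩ := exists_section_of_formallySmooth hq hg hgC hKg le_sup_left
    (by rw [hϖ, Ideal.map_span, Set.image_singleton]; exact le_sup_right)
  choose y hy using fun i ↦ Ideal.Quotient.mk_surjective (s (g (X i)))
  have hφ : (Ideal.Quotient.mk K).comp (eval₂Hom C y) = s.comp g :=
    ringHom_ext (fun r ↦ by simpa using (RingHom.congr_fun hsC r).symm) fun i ↦ by simp [hy]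
  have hgφ : g.comp (eval₂Hom C y) = g :=
    calc g.comp (eval₂Hom C y) = (Ideal.Quotient.lift K g hKg).comp (s.comp g) := by
          rw [← hφ]; rfl
      _ = g := by rw [← RingHom.comp_assoc, hgs, RingHom.id_comp]
  refine ⟨eval₂Hom C y, hCϖ, by simp, fun z ↦ ?_, Ideal.map_le_iff_le_comap.2 fun z hz ↦ ?_⟩
  · exact (RingHom.sub_mem_ker_iff g).2 (RingHom.congr_fun hgφ z)
  · have hz0 : Ideal.Quotient.mk K (eval₂Hom C y z) = s (g z) := RingHom.congr_fun hφ z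
    rw [RingHom.mem_ker.1 hz, map_zero] at hz0
    exact (Ideal.Quotient.eq_zero_iff_mem (I := K)).1 hz0

lemma flat_of_uniformizer_mem_nonZeroDivisors {R B : Type*} [CommRing R] [IsDomain R]
    [IsDiscreteValuationRing R] [CommRing B] [Algebra R B] {ϖ : R} (hϖ : Irreducible ϖ)
    (hB : algebraMap R B ϖ ∈ nonZeroDivisors B) : Module.Flat R B := by
  have : Module.IsTorsionFree R B := by
    refine Module.isTorsionFree_iff_smul_eq_zero.2 fun r b hrb ↦ or_iff_not_imp_left.2 fun hr ↦ ?_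
    obtain ⟨n, u, rfl⟩ := IsDiscreteValuationRing.eq_unit_mul_pow_irreducible hr hϖ
    rw [Algebra.smul_def, map_mul, map_pow, mul_assoc] at hrb
    exact (mul_left_mem_nonZeroDivisors_eq_zero_iff (pow_mem hB n)).1
      ((u.isUnit.map (algebraMap R B)).mul_right_eq_zero.1 hrb)
  infer_instance

lemma ker_eq_span_of_irreducible {R k : Type*} [CommRing R] [IsDomain R]
    [IsDiscreteValuationRing R] [Field k] {q : R →+* k} (hq : Function.Surjective q) {ϖ : R}
    (hϖ : Irreducible ϖ) : RingHom.ker q = Ideal.span {ϖ} :=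
  (IsLocalRing.eq_maximalIdeal (RingHom.ker_isMaximal_of_surjective q hq)).trans
    hϖ.maximalIdeal_eq

section
variable {R k A : Type*} [CommRing R] [IsDomain R] [IsDiscreteValuationRing R] [Field k]
  [CommRing A] [Algebra k A] {q : R →+* k} (hq : Function.Surjective q)
include hq

lemma IsAdicTower.exists_isAdicLift {S : Type*} [CommRing S] [Algebra R S] {ϖ : R}
    (hϖ : Irreducible ϖ) {T : ℕ → Ideal S} (hT : IsAdicTower (algebraMap R S ϖ) T)
    {g : S →+* A} (hg : Function.Surjective g) (hT_one : T 1 = RingHom.ker g)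
    (hgR : g.comp (algebraMap R S) = (algebraMap k A).comp q) :
    ∃ f : towerLimit T →+* A, IsAdicLift q f := by
  let e : (S ⧸ T 1) ≃+* A :=
    (Ideal.quotEquivOfEq hT_one).trans (RingHom.quotientKerEquivOfSurjective hg)
  have hmap : (RingHom.ker q).map (algebraMap R (towerLimit T)) =
      Ideal.span {algebraMap S (towerLimit T) (algebraMap R S ϖ)} := by
    rw [ker_eq_span_of_irreducible hq hϖ, Ideal.map_span, Set.image_singleton]
    rfl
  refine ⟨e.toRingHom.comp (towerLimit.eval T 1).toRingHom,
    flat_of_uniformizer_mem_nonZeroDivisors hϖ hT.algebraMap_mem_nonZeroDivisors,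
    (IsAdicComplete.map_algebraMap_iff (S := towerLimit T) _ _).1 ?_,
    e.surjective.comp (towerLimit.eval_surjective 1), ?_, hgR⟩
  · rw [hmap]
    exact hT.isAdicComplete_towerLimit
  · rw [hmap, ← pow_one (Ideal.span _), ← hT.ker_eval]
    exact RingHom.ker_comp_of_injective _ e.injective

variable (A) in
theorem exists_isAdicLift_of_smooth [Algebra.Smooth k A] :
    ∃ (n : ℕ) (T : ℕ → Ideal (MvPolynomial (Fin n) R)) (f : towerLimit T →+* A),
      IsAdicLift (B := towerLimit T) q f := by
  obtain ⟨ϖ, hϖ⟩ := IsDiscreteValuationRing.exists_irreducible R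
  obtain ⟨n, x, hg⟩ := exists_surjective_eval₂Hom (ρ := (algebraMap k A).comp q)
    ((RingHom.finiteType_algebraMap.2 inferInstance).comp (.of_surjective q hq))
  have hgC : (MvPolynomial.eval₂Hom ((algebraMap k A).comp q) x).comp MvPolynomial.C =
      (algebraMap k A).comp q := by ext; simp
  obtain ⟨φ, hφ⟩ := exists_isContraction_of_formallySmooth hq
    (ker_eq_span_of_irreducible hq hϖ) hg hgC
  have hCϖ : MvPolynomial.C ϖ ∈ nonZeroDivisors (MvPolynomial (Fin n) R) :=
    mem_nonZeroDivisors_of_ne_zero (MvPolynomial.C_ne_zero.2 hϖ.ne_zero)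
  exact ⟨n, _, (hφ.isAdicTower hCϖ).exists_isAdicLift hq hϖ hg hφ.contractedIdeal_one hgC⟩

end

theorem exists_unique_witt_lift_of_smooth_general {R : Type u} {k A : Type*} [CommRing R]
    [IsDomain R] [IsDiscreteValuationRing R] [Field k] [CommRing A] [Algebra k A]
    [Algebra.Smooth k A] {q : R →+* k} (hq : Function.Surjective q) :
    (∃ (B : Type u) (_ : CommRing B) (_ : Algebra R B) (f : B →+* A), IsAdicLift q f ∧
      ∀ n, Algebra.Smooth (R ⧸ RingHom.ker q ^ (n + 1))
        (B ⧸ (RingHom.ker q ^ (n + 1)).map (algebraMap R B))) ∧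
    ∀ {B₁ B₂ : Type u} [CommRing B₁] [CommRing B₂] [Algebra R B₁] [Algebra R B₂]
      {f₁ : B₁ →+* A} {f₂ : B₂ →+* A}, IsAdicLift q f₁ → IsAdicLift q f₂ →
      ∃ e : B₁ ≃ₐ[R] B₂, ∀ b, f₂ (e b) = f₁ b := by
  obtain ⟨_, T, f, hf⟩ := exists_isAdicLift_of_smooth A hq
  exact ⟨⟨towerLimit T, inferInstance, inferInstance, f, hf, hf.smooth_quotient_pow hq⟩,
    fun h₁ h₂ ↦ h₁.exists_algEquiv hq h₂⟩

/-! ### Witt vectors -/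

lemma smooth_reduceModPn {p : ℕ} {R B : Type u} [CommRing R] [CommRing B] [Algebra R B] {n : ℕ}
    (h : Algebra.Smooth (R ⧸ Ideal.span {(p : R)} ^ n)
      (B ⧸ (Ideal.span {(p : R)} ^ n).map (algebraMap R B))) :
    (reduceModPn p (algebraMap R B) n).Smooth := by
  have smooth_quotientMap {I : Ideal R} {J : Ideal B} (hI : Ideal.span {(p : R)} ^ n = I)
      (hJ : (Ideal.span {(p : R)} ^ n).map (algebraMap R B) = J)
      (hIJ : I ≤ J.comap (algebraMap R B)) :
      (Ideal.quotientMap J (algebraMap R B) hIJ).Smooth := by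
    subst hI hJ
    exact RingHom.smooth_algebraMap.2 h
  exact smooth_quotientMap (Ideal.span_singleton_pow _ _) (by
    rw [Ideal.span_singleton_pow, Ideal.map_span, Set.image_singleton, map_pow, map_natCast]) _

section
variable (p : ℕ) [Fact p.Prime] (k : Type*) [CommRing k]

lemma ghostComponent_zero_eq_constantCoeff :
    (WittVector.ghostComponent 0 : WittVector p k →+* k) = WittVector.constantCoeff :=
  RingHom.ext fun w ↦ by simp [WittVector.ghostComponent_apply]

lemma ghostComponent_zero_surjective :
    Function.Surjective (WittVector.ghostComponent 0 : WittVector p k →+* k) := by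
  rw [ghostComponent_zero_eq_constantCoeff]
  exact WittVector.constantCoeff_surjective p

variable [CharP k p] [PerfectRing k p]

lemma ker_ghostComponent_zero :
    RingHom.ker (WittVector.ghostComponent 0 : WittVector p k →+* k) =
      Ideal.span {(p : WittVector p k)} := by
  rw [ghostComponent_zero_eq_constantCoeff, WittVector.ker_constantCoeff]

lemma map_ker_ghostComponent_zero (B : Type*) [CommRing B] [Algebra (WittVector p k) B] :
    (RingHom.ker (WittVector.ghostComponent 0)).map (algebraMap (WittVector p k) B) =
      Ideal.span {(p : B)} := by
  rw [ker_ghostComponent_zero, Ideal.map_span, Set.image_singleton, map_natCast]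

end

section
variable {p : ℕ} [Fact p.Prime] {k : Type u} [Field k] [CharP k p] [PerfectRing k p]
  {A : Type u} [CommRing A] [Algebra k A]

/-- The `WittLift` given by a lift along the residue map with smooth reductions. -/
noncomputable def IsAdicLift.toWittLift {B : Type u} [CommRing B] [Algebra (WittVector p k) B]
    {f : B →+* A} (h : IsAdicLift (WittVector.ghostComponent 0 : WittVector p k →+* k) f)
    (hsmooth : ∀ n, Algebra.Smooth
      (WittVector p k ⧸ RingHom.ker (WittVector.ghostComponent 0) ^ (n + 1))
      (B ⧸ (RingHom.ker (WittVector.ghostComponent 0) ^ (n + 1)).map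
        (algebraMap (WittVector p k) B))) :
    WittLift p k A where
  B := B
  flat := h.flat
  complete := by
    rw [← map_ker_ghostComponent_zero p k, IsAdicComplete.map_algebraMap_iff]
    exact h.complete
  equiv := (Ideal.quotEquivOfEq (map_ker_ghostComponent_zero p k B).symm).trans h.quotientEquiv
  compat := RingHom.congr_fun h.comp_algebraMap
  smooth n hn := by
    obtain ⟨m, rfl⟩ := Nat.exists_eq_add_of_le' hn
    exact smooth_reduceModPn (ker_ghostComponent_zero p k ▸ hsmooth m)

namespace WittLift

/-- The reduction `L.B → A` modulo `p`. -/
noncomputable def residueMap (L : WittLift p k A) : L.B →+* A :=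
  (L.equiv : L.B ⧸ Ideal.span {(p : L.B)} →+* A).comp (Ideal.Quotient.mk _)

lemma isAdicLift_residueMap (L : WittLift p k A) :
    IsAdicLift (WittVector.ghostComponent 0 : WittVector p k →+* k) L.residueMap where
  flat := L.flat
  complete := by
    rw [← IsAdicComplete.map_algebraMap_iff (S := L.B), map_ker_ghostComponent_zero]
    exact L.complete
  surjective := L.equiv.surjective.comp Ideal.Quotient.mk_surjective
  ker_eq := by
    rw [residueMap, RingHom.ker_comp_of_injective _ L.equiv.injective, Ideal.mk_ker,
      map_ker_ghostComponent_zero]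
  comp_algebraMap := RingHom.ext L.compat

end WittLift
end

/-- Let `k` be a perfect field of characteristic `p > 0`, `W = W(k)` its ring
of Witt vectors, and `A` a smooth `k`-algebra. Then there exists a flat, `p`-adically complete
`W`-algebra `B` lifting `A` whose reductions `B/pⁿB` are smooth over `W/pⁿ` for all `n ≥ 1`;
moreover such a `B` is unique up to isomorphism of `W`-algebras compatible with the
identification modulo `p`. -/
theorem exists_unique_witt_lift_of_smooth
    (p : ℕ) [Fact p.Prime] (k : Type u) [Field k] [CharP k p] [PerfectRing k p]
    (A : Type u) [CommRing A] [Algebra k A] (hA : Algebra.Smooth k A) :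
    Nonempty (WittLift p k A) ∧
    ∀ L₁ L₂ : WittLift p k A,
      ∃ e : L₁.B ≃ₐ[WittVector p k] L₂.B,
        ∀ b : L₁.B,
          L₂.equiv (Ideal.Quotient.mk _ (e b)) = L₁.equiv (Ideal.Quotient.mk _ b) := by
  obtain ⟨⟨B, _, _, f, hf, hsmooth⟩, hunique⟩ :=
    exists_unique_witt_lift_of_smooth_general (A := A) (ghostComponent_zero_surjective p k)
  exact ⟨⟨hf.toWittLift hsmooth⟩,
    fun L₁ L₂ ↦ hunique L₁.isAdicLift_residueMap L₂.isAdicLift_residueMap⟩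
end

section
/- Let k be a perfect field of characteristic p > 0, W = W(k), and W_n = W/p^nW. Let A be a smooth k-algebra and B a flat, p-adically complete W-algebra lifting A (i.e. B ⊗_W k ≅ A) such that B/p^nB is smooth over W_n for all n ≥ 1. Let A → C be a smooth homomorphism of k-algebras. Then there exists a p-adically complete B-algebra C̃ which is flat over B together with an isomorphism C̃ ⊗_W k ≅ C of A-algebras lifting A → C, and such a flat lift is unique up to isomorphism. -/
universe u

/-- A lift of a smooth `A`-algebra `C` to a flat, `p`-adically complete `B`-algebra `C̃`
with an identification `C̃/pC̃ ≅ C` lifting the structure map `A → C`. -/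
structure SmoothLift (p : ℕ) [Fact p.Prime] (k : Type u) [Field k] [CharP k p] [PerfectRing k p]
    (A : Type u) [CommRing A] [Algebra k A] (L : WittLift p k A)
    (C : Type u) [CommRing C] [Algebra A C] : Type (u + 1) where
  Ct : Type u
  [commRing : CommRing Ct]
  [alg : Algebra L.B Ct]
  flat : Module.Flat L.B Ct
  complete : IsAdicComplete (Ideal.span {(p : Ct)}) Ct
  equiv : (Ct ⧸ Ideal.span {(p : Ct)}) ≃+* C
  compat : ∀ b : L.B,
    equiv (Ideal.Quotient.mk _ (algebraMap L.B Ct b)) =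
      algebraMap A C (L.equiv (Ideal.Quotient.mk _ b))

section
variable {p : ℕ} [Fact p.Prime] {k : Type u} [Field k] [CharP k p] [PerfectRing k p]
    {A : Type u} [CommRing A] [Algebra k A] {L : WittLift p k A}
    {C : Type u} [CommRing C] [Algebra A C]

instance (M : SmoothLift p k A L C) : CommRing M.Ct := M.commRing
instance (M : SmoothLift p k A L C) : Algebra L.B M.Ct := M.alg

end

/-!
Write `C = P/J` with `P` a polynomial ring over `B`, and let `Q` be the `J`-adic completion of `P`.
Smoothness of `B/I → C` provides a section of `Q/IQ → C`, and hence an endomorphism `e` of `Q` over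
`C` which kills `ker (Q → C)` modulo `IQ`; in particular `e` is idempotent modulo `IQ`. The
polynomials `1 - (1 - Xⁿ)ⁿ` evaluated at `e` converge `I`-adically to a `B`-linear projection onto a
subalgebra `E` of `Q`. As a retract of `Q`, the algebra `E` is flat and complete, and `E/IE = C`.
The ring `Q`, and therefore `E`, maps to every flat complete lift of `C`, and any morphism between
two such lifts is bijective: it is surjective by Nakayama's lemma, and flatness shows that its
kernel `K` satisfies `K = IK`, so that it vanishes. The ring `B` of the theorem is noetherian since
it is `p`-adically complete with `B/pB` noetherian.
-/

open Function Polynomial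

universe v

section AdicModules

variable {R : Type*} [CommRing R] {I J : Ideal R} {M N : Type*} [AddCommGroup M] [Module R M]
  [AddCommGroup N] [Module R N]

theorem isAdicComplete_of_retract [IsAdicComplete I M] (i : N →ₗ[R] M) (r : M →ₗ[R] N)
    (hri : r ∘ₗ i = LinearMap.id) : IsAdicComplete I N := by
  have hM : Bijective (AdicCompletion.of I M) := AdicCompletion.of_bijective_iff.mpr ‹_›
  have hi : Injective i := LeftInverse.injective fun x ↦ congr($hri x)
  refine AdicCompletion.of_bijective_iff.mp ⟨fun x y hxy ↦ hi (hM.1 ?_), fun y ↦ ?_⟩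
  · rw [← AdicCompletion.map_of, ← AdicCompletion.map_of, hxy]
  · obtain ⟨x, hx⟩ := hM.2 (AdicCompletion.map I i y)
    refine ⟨r x, ?_⟩
    rw [← AdicCompletion.map_of, hx, ← LinearMap.comp_apply, AdicCompletion.map_comp, hri,
      AdicCompletion.map_id, LinearMap.id_apply]

theorem isAdicComplete_of_linearEquiv [IsAdicComplete I M] (e : M ≃ₗ[R] N) : IsAdicComplete I N :=
  isAdicComplete_of_retract e.symm.toLinearMap e.toLinearMap (by simp)

theorem isAdicComplete_of_le [IsAdicComplete J M] (hIJ : I ≤ J)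
    (h : ∀ n, IsHausdorff J (M ⧸ (I ^ n • ⊤ : Submodule R M))) : IsAdicComplete I M where
  haus' x hx := by
    refine IsHausdorff.haus inferInstance (I := J) x fun n ↦ ?_
    exact (hx n).mono (Submodule.smul_mono_left (Ideal.pow_right_mono hIJ n))
  prec' f hf := by
    have hle (n : ℕ) : (I ^ n • ⊤ : Submodule R M) ≤ J ^ n • ⊤ :=
      Submodule.smul_mono_left (Ideal.pow_right_mono hIJ n)
    obtain ⟨L, hL⟩ := IsPrecomplete.prec (I := J) inferInstance fun hmn ↦ (hf hmn).mono (hle _)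
    refine ⟨L, fun n ↦ ?_⟩
    rw [SModEq.sub_mem, ← Submodule.Quotient.mk_eq_zero]
    refine (h n).haus _ fun m ↦ ?_
    have hmem : f (max m n) - L ∈ (J ^ m • ⊤ : Submodule R M) :=
      SModEq.sub_mem.mp ((hL (max m n)).mono
        (Submodule.smul_mono_left (Ideal.pow_le_pow_right (le_max_left m n))))
    have heq : Submodule.Quotient.mk (f n - L) =
        (I ^ n • ⊤ : Submodule R M).mkQ (f (max m n) - L) :=
      (Submodule.Quotient.eq _).mpr (by
        simpa using SModEq.sub_mem.mp (hf (le_max_right m n)))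
    rw [SModEq.zero, heq]
    exact Submodule.smul_top_le_comap_smul_top _ _ hmem

theorem isHausdorff_submodule [IsHausdorff I M] (N : Submodule R M) : IsHausdorff I N where
  haus' x hx := Subtype.ext <| IsHausdorff.haus inferInstance (I := I) (x : M) fun n ↦
    SModEq.zero.mpr <| Submodule.smul_top_le_comap_smul_top _ N.subtype (SModEq.zero.mp (hx n))

theorem isPrecomplete_pi (I : Ideal R) (ι : Type*) [Finite ι] [IsPrecomplete I M] :
    IsPrecomplete I (ι → M) := by
  classical
  cases nonempty_fintype ι
  refine AdicCompletion.of_surjective_iff.mp fun x ↦ ?_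
  choose y hy using fun i ↦ AdicCompletion.of_surjective I M
    (AdicCompletion.piEquivOfFintype I (fun _ : ι ↦ M) x i)
  refine ⟨y, (AdicCompletion.piEquivOfFintype I fun _ : ι ↦ M).injective (funext fun i ↦ ?_)⟩
  rw [← hy i, AdicCompletion.piEquivOfFintype_apply]
  exact AdicCompletion.map_of ..

theorem finite_of_finite_quotient_smul_top [IsPrecomplete I R] [IsHausdorff I M]
    [Module.Finite R (M ⧸ (I • ⊤ : Submodule R M))] : Module.Finite R M := by
  obtain ⟨n, f, hf⟩ := Module.Finite.exists_fin' R (M ⧸ (I • ⊤ : Submodule R M))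
  obtain ⟨g, hg⟩ := Module.projective_lifting_property (I • ⊤ : Submodule R M).mkQ f
    (Submodule.mkQ_surjective _)
  have := isPrecomplete_pi (M := R) I (Fin n)
  exact .of_surjective g (surjective_of_mkQ_comp_surjective (I := I) (hg ▸ hf))

end AdicModules

section Noetherian

variable {R : Type*} [CommRing R]

theorem mem_span_singleton_smul_top_of_isPrime {a : R} {P : Ideal R} (hP : P.IsPrime) (ha : a ∉ P)
    {x : P} (hx : (x : R) ∈ Ideal.span {a}) : x ∈ (Ideal.span {a} • ⊤ : Submodule R P) := by
  obtain ⟨y, hy⟩ := Ideal.mem_span_singleton.mp hx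
  have hyP : y ∈ P := (hP.mem_or_mem (hy ▸ x.2)).resolve_left ha
  have hxy : x = a • (⟨y, hyP⟩ : P) := Subtype.ext hy
  rw [hxy]
  exact Submodule.smul_mem_smul (Ideal.mem_span_singleton_self a) trivial

theorem isNoetherianRing_of_isAdicComplete_span_singleton (a : R)
    [IsAdicComplete (Ideal.span {a}) R] [IsNoetherianRing (R ⧸ Ideal.span {a})] :
    IsNoetherianRing R := by
  let toRing : (R ⧸ Ideal.span {a}) →ₛₗ[Ideal.Quotient.mk (Ideal.span {a})] R ⧸ Ideal.span {a} :=
    ⟨.id _, fun _ _ ↦ rfl⟩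
  have : IsNoetherian R (R ⧸ Ideal.span {a}) :=
    (toRing.isNoetherian_iff_of_bijective bijective_id).mpr ‹_›
  refine .of_prime fun P hP ↦ ?_
  by_cases ha : a ∈ P
  · refine Submodule.fg_of_fg_map_of_fg_inf_ker (Ideal.span {a}).mkQ (IsNoetherian.noetherian _) ?_
    rw [Submodule.ker_mkQ, inf_eq_right.mpr ((Ideal.span_singleton_le_iff_mem P).mpr ha)]
    exact Submodule.fg_span_singleton a
  · have := isHausdorff_submodule (I := Ideal.span {a}) P
    let φ : P →ₗ[R] R ⧸ Ideal.span {a} := (Ideal.span {a}).mkQ ∘ₗ P.subtype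
    have hφ : φ.ker ≤ Ideal.span {a} • ⊤ := fun x hx ↦
      mem_span_singleton_smul_top_of_isPrime hP ha (Ideal.Quotient.eq_zero_iff_mem.mp hx)
    have : Module.Finite R (P ⧸ φ.ker) := .equiv φ.quotKerEquivRange.symm
    have : Module.Finite R (P ⧸ (Ideal.span {a} • ⊤ : Submodule R P)) :=
      .of_surjective (Submodule.factor hφ) (Submodule.factor_surjective hφ)
    have : Module.Finite R P := finite_of_finite_quotient_smul_top (I := Ideal.span {a})
    exact Module.Finite.iff_fg.mp this

end Noetherian

section IdempotentLifting

variable {R : Type*} [CommRing R] {I : Ideal R} {M : Type*} [AddCommGroup M] [Module R M]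

theorem pow_apply_mem_pow_smul_top {f : Module.End R M}
    (hf : ∀ x, f x ∈ (I • ⊤ : Submodule R M)) (n : ℕ) (x : M) :
    (f ^ n) x ∈ (I ^ n • ⊤ : Submodule R M) := by
  have hrange : Submodule.map f ⊤ ≤ I • ⊤ := Submodule.map_le_iff_le_comap.mpr fun x _ ↦ hf x
  induction n with
  | zero => simp
  | succ n ih =>
    have hmem := Submodule.mem_map_of_mem (f := f) ih
    rw [Submodule.map_smul''] at hmem
    rw [pow_succ' f, pow_succ I, mul_smul]
    exact smul_mono_right _ hrange hmem

theorem aeval_apply_mem_pow_smul_top {e : Module.End R M}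
    (he : ∀ x, e (e x) - e x ∈ (I • ⊤ : Submodule R M)) {n : ℕ} {g : ℤ[X]}
    (hX : X ^ n ∣ g) (hX' : (1 - X) ^ n ∣ g) (x : M) :
    aeval e g x ∈ (I ^ n • ⊤ : Submodule R M) := by
  have hcop : IsCoprime (X ^ n : ℤ[X]) ((1 - X) ^ n) := IsCoprime.pow ⟨1, 1, by ring⟩
  obtain ⟨h, rfl⟩ := hcop.mul_dvd hX hX'
  have hpow : aeval e (X ^ n * (1 - X) ^ n * h : ℤ[X]) = (e * (1 - e)) ^ n * aeval e h := by
    rw [← mul_pow]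
    simp
  rw [hpow, Module.End.mul_apply]
  exact pow_apply_mem_pow_smul_top
    (fun y ↦ by simpa [mul_sub] using neg_mem (he y)) n _

/-- The polynomial `1 - (1 - Xⁿ)ⁿ`, congruent to `0` modulo `Xⁿ` and to `1` modulo `(1 - X)ⁿ`:
its values at an approximately idempotent `e` approximate an idempotent. -/
noncomputable def idempotentPoly (n : ℕ) : ℤ[X] := 1 - (1 - X ^ n) ^ n

theorem X_pow_dvd_idempotentPoly {m n : ℕ} (h : m ≤ n) : X ^ m ∣ idempotentPoly n := by
  refine (pow_dvd_pow X h).trans ?_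
  have hdvd := sub_dvd_pow_sub_pow (1 : ℤ[X]) (1 - X ^ n) n
  rwa [sub_sub_cancel, one_pow] at hdvd

theorem one_sub_X_pow_dvd_one_sub_idempotentPoly {m n : ℕ} (h : m ≤ n) :
    (1 - X) ^ m ∣ 1 - idempotentPoly n := by
  refine (pow_dvd_pow _ h).trans ?_
  have hdvd : (1 - X : ℤ[X]) ∣ 1 - X ^ n := by simpa using sub_dvd_pow_sub_pow (1 : ℤ[X]) X n
  simpa [idempotentPoly] using pow_dvd_pow_of_dvd hdvd n

theorem aeval_idempotentPoly_sub_mem {e : Module.End R M}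
    (he : ∀ x, e (e x) - e x ∈ (I • ⊤ : Submodule R M)) {m n : ℕ} (h : m ≤ n) (x : M) :
    aeval e (idempotentPoly n) x - aeval e (idempotentPoly m) x ∈ (I ^ m • ⊤ : Submodule R M) := by
  rw [← LinearMap.sub_apply, ← map_sub]
  refine aeval_apply_mem_pow_smul_top he ?_ ?_ x
  · exact (X_pow_dvd_idempotentPoly h).sub (X_pow_dvd_idempotentPoly le_rfl)
  · simpa using (one_sub_X_pow_dvd_one_sub_idempotentPoly le_rfl).sub
      (one_sub_X_pow_dvd_one_sub_idempotentPoly h)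

theorem exists_projection_of_idempotent_mod [IsAdicComplete I M] {e : Module.End R M}
    (he : ∀ x, e (e x) - e x ∈ (I • ⊤ : Submodule R M)) :
    ∃ P : Module.End R M, (∀ x, P x - e x ∈ (I • ⊤ : Submodule R M)) ∧
      (∀ x n, ∃ y, (e ^ n) y - P x ∈ (I ^ n • ⊤ : Submodule R M)) ∧
      ∀ x, (∀ n, ∃ y, (e ^ n) y - x ∈ (I ^ n • ⊤ : Submodule R M)) → P x = x := by
  let Pn (n : ℕ) : Module.End R M := aeval e (idempotentPoly n)
  obtain ⟨P, hP⟩ : ∃ P : Module.End R M, ∀ n x, P x - Pn n x ∈ (I ^ n • ⊤ : Submodule R M) :=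
    ⟨IsAdicComplete.lift I (fun n ↦ Submodule.mkQ _ ∘ₗ Pn n) fun {m n} hle ↦ LinearMap.ext fun x ↦
      (Submodule.Quotient.eq _).mpr (aeval_idempotentPoly_sub_mem he hle x),
      fun n x ↦ (Submodule.Quotient.eq _).mp (IsAdicComplete.mk_lift ..)⟩
  refine ⟨P, fun x ↦ ?_, fun x n ↦ ?_, fun x hx ↦ ?_⟩
  · simpa [Pn, idempotentPoly] using hP 1 x
  · obtain ⟨h, hh⟩ := X_pow_dvd_idempotentPoly (le_refl n)
    refine ⟨aeval e h x, ?_⟩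
    have hrange : Pn n x = (e ^ n) (aeval e h x) := by simp [Pn, hh]
    simpa [hrange] using neg_mem (hP n x)
  · refine (IsHausdorff.eq_iff_smodEq (I := I)).mpr fun n ↦ SModEq.sub_mem.mpr ?_
    obtain ⟨y, hy⟩ := hx n
    have hfix : Pn n ((e ^ n) y) - (e ^ n) y ∈ (I ^ n • ⊤ : Submodule R M) := by
      have hmem := aeval_apply_mem_pow_smul_top he (dvd_mul_left (X ^ n) (1 - idempotentPoly n))
        ((one_sub_X_pow_dvd_one_sub_idempotentPoly le_rfl).mul_right _) y
      simpa [Pn, sub_mul] using neg_mem hmem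
    have hsmall := Submodule.smul_top_le_comap_smul_top (I ^ n) (Pn n - 1) hy
    have hsplit : P x - x = (P x - Pn n x) + (Pn n ((e ^ n) y) - (e ^ n) y) -
        (Pn n - 1) ((e ^ n) y - x) := by
      simp only [LinearMap.sub_apply, Module.End.one_apply, map_sub]
      abel
    rw [hsplit]
    exact sub_mem (add_mem (hP n x) hfix) hsmall

theorem exists_subalgebra_retraction {Q : Type*} [CommRing Q] [Algebra R Q] [IsAdicComplete I Q]
    (e : Q →ₐ[R] Q) (he : ∀ x, e (e x) - e x ∈ (I • ⊤ : Submodule R Q)) :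
    ∃ (E : Subalgebra R Q) (P : Q →ₗ[R] E), P ∘ₗ E.val.toLinearMap = LinearMap.id ∧
      ∀ x, (P x : Q) - e x ∈ (I • ⊤ : Submodule R Q) := by
  obtain ⟨P, hPe, hmem, hfix⟩ := exists_projection_of_idempotent_mod (e := e.toLinearMap) he
  let q (n : ℕ) : Q →ₐ[R] Q ⧸ (I ^ n).map (algebraMap R Q) := Ideal.Quotient.mkₐ R _
  let E : Subalgebra R Q := ⨅ n, ((q n).comp (e ^ n)).range.comap (q n)
  have hE (x : Q) : x ∈ E ↔ ∀ n, ∃ y, (e ^ n) y - x ∈ (I ^ n • ⊤ : Submodule R Q) := by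
    simp only [E, Algebra.mem_iInf, Subalgebra.mem_comap, AlgHom.mem_range, Ideal.smul_top_eq_map,
      Submodule.restrictScalars_mem, q]
    exact forall_congr' fun n ↦ exists_congr fun y ↦ Ideal.Quotient.eq
  have hPE (x : Q) : P x ∈ E := (hE _).mpr fun n ↦ by
    obtain ⟨y, hy⟩ := hmem x n
    exact ⟨y, by simpa [Module.End.pow_apply, AlgHom.coe_pow] using hy⟩
  refine ⟨E, P.codRestrict E.toSubmodule hPE, LinearMap.ext fun x ↦ Subtype.ext ?_, hPe⟩
  refine hfix _ fun n ↦ ?_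
  obtain ⟨y, hy⟩ := (hE _).mp x.2 n
  exact ⟨y, by simpa [Module.End.pow_apply, AlgHom.coe_pow] using hy⟩

end IdempotentLifting

section Completion

variable {R : Type*} [CommRing R] [IsNoetherianRing R] (J 𝔞 : Ideal R)

theorem isAdicComplete_adicCompletion_quotient_smul_top :
    IsAdicComplete J (AdicCompletion J R ⧸ (𝔞 • ⊤ : Submodule R (AdicCompletion J R))) := by
  have : IsAdicComplete J (AdicCompletion J (R ⧸ 𝔞)) :=
    AdicCompletion.isAdicComplete (IsNoetherian.noetherian J)
  exact isAdicComplete_of_linearEquiv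
    (((AdicCompletion.ofTensorProductEquivOfFiniteNoetherian J (R ⧸ 𝔞)).restrictScalars R).symm ≪≫ₗ
      TensorProduct.tensorQuotEquivQuotSMul _ 𝔞)

theorem isAdicComplete_adicCompletion_quotient_map :
    IsAdicComplete J (AdicCompletion J R ⧸ 𝔞.map (algebraMap R (AdicCompletion J R))) := by
  have := isAdicComplete_adicCompletion_quotient_smul_top J 𝔞
  exact isAdicComplete_of_linearEquiv
    (Submodule.quotEquivOfEq _ _ (Ideal.smul_top_eq_map 𝔞) ≪≫ₗ
      Submodule.Quotient.restrictScalarsEquiv R _)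

variable {J 𝔞} in
theorem isAdicComplete_adicCompletion_of_le (h : 𝔞 ≤ J) :
    IsAdicComplete 𝔞 (AdicCompletion J R) := by
  have : IsAdicComplete J (AdicCompletion J R) :=
    AdicCompletion.isAdicComplete (IsNoetherian.noetherian J)
  exact isAdicComplete_of_le h fun n ↦
    (isAdicComplete_adicCompletion_quotient_smul_top J (𝔞 ^ n)).toIsHausdorff

end Completion

section Algebras

variable {B : Type*} [CommRing B]

theorem exists_algHom_adicCompletion_extension {R S : Type*} [CommRing R] [Algebra B R]
    [CommRing S] [Algebra B S] {J : Ideal R} {K : Ideal S} [IsAdicComplete K S] (ψ : R →ₐ[B] S)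
    (hψ : J.map ψ ≤ K) :
    ∃ Ψ : AdicCompletion J R →ₐ[B] S, Ψ.comp (IsScalarTower.toAlgHom B R _) = ψ := by
  have hpow (n : ℕ) : J ^ n ≤ (K ^ n).comap ψ := by
    rw [← Ideal.map_le_iff_le_comap, Ideal.map_pow]
    exact Ideal.pow_right_mono hψ n
  let Ψn (n : ℕ) : AdicCompletion J R →ₐ[B] S ⧸ K ^ n :=
    (Ideal.quotientMapₐ (K ^ n) ψ (hpow n)).comp ((AdicCompletion.evalₐ J n).restrictScalars B)
  have hΨn {m n : ℕ} (hle : m ≤ n) :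
      (Ideal.Quotient.factorₐ B (Ideal.pow_le_pow_right hle)).comp (Ψn n) = Ψn m := by
    ext x
    obtain ⟨x, rfl⟩ := AdicCompletion.mk_surjective J R x
    have hx : x n - x m ∈ J ^ m := Ideal.Quotient.eq.mp (AdicCompletion.Ideal.mk_eq_mk J hle x)
    simpa [Ψn, Ideal.Quotient.eq] using hpow m hx
  refine ⟨IsAdicComplete.liftAlgHom K Ψn hΨn, IsAdicComplete.algHom_ext K fun n ↦ ?_⟩
  ext x
  simp [Ψn, AdicCompletion.algebraMap_apply]

theorem exists_section_of_formallySmooth_s6 {S C : Type*} [CommRing S] [Algebra B S]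
    [CommRing C] [Algebra B C] [Algebra.FormallySmooth B C] {f : S →ₐ[B] C} (hf : Surjective f)
    [IsAdicComplete (RingHom.ker f) S] : ∃ s : C →ₐ[B] S, f.comp s = AlgHom.id B C := by
  obtain ⟨s, hs⟩ := Algebra.FormallySmooth.exists_mkₐ_comp_eq_of_isAdicComplete
    (Ideal.quotientKerAlgEquivOfSurjective hf).symm.toAlgHom
  refine ⟨s, AlgHom.ext fun c ↦ ?_⟩
  have hc := congr(Ideal.quotientKerAlgEquivOfSurjective hf ($hs c))
  simpa using! hc

theorem exists_mvPolynomial_lift {ι S T : Type*} [CommRing S] [Algebra B S] [CommRing T]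
    [Algebra B T] {q : S →ₐ[B] T} (hq : Surjective q) (φ : MvPolynomial ι B →ₐ[B] T) :
    ∃ ψ : MvPolynomial ι B →ₐ[B] S, q.comp ψ = φ := by
  choose x hx using fun i ↦ hq (φ (.X i))
  exact ⟨MvPolynomial.aeval x, MvPolynomial.algHom_ext fun i ↦ by simp [hx]⟩

end Algebras

theorem le_ker_algebraMap {B : Type*} [CommRing B] (I : Ideal B) (C : Type*) [CommRing C]
    [Algebra B C] [Algebra (B ⧸ I) C] [IsScalarTower B (B ⧸ I) C] :
    I ≤ RingHom.ker (algebraMap B C) := fun b hb ↦ by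
  rw [RingHom.mem_ker, IsScalarTower.algebraMap_apply B (B ⧸ I) C, Ideal.Quotient.algebraMap_eq,
    Ideal.Quotient.eq_zero_iff_mem.mpr hb, map_zero]

theorem map_algebraMap_le_ker {B S C : Type*} [CommRing B] [CommRing S] [Algebra B S] [CommRing C]
    [Algebra B C] {I : Ideal B} (hI : I ≤ RingHom.ker (algebraMap B C)) (σ : S →ₐ[B] C) :
    I.map (algebraMap B S) ≤ RingHom.ker σ :=
  Ideal.map_le_iff_le_comap.mpr fun b hb ↦ by simpa [RingHom.mem_ker] using hI hb

section KerProj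

variable {B R C : Type*} [CommRing B] [CommRing R] [Algebra B R] [CommRing C] [Algebra B C]
  {f : R →ₐ[B] C}

theorem adicCompletion_algHom_ext {J : Ideal R} (hJ : J.FG)
    {φ φ' : AdicCompletion J R →ₐ[B] C}
    (h : φ.comp (IsScalarTower.toAlgHom B R _) = φ'.comp (IsScalarTower.toAlgHom B R _))
    (hφ : ∀ x ∈ J, φ (algebraMap R _ x) = 0) : φ = φ' := by
  have h' (x : R) : φ (algebraMap R _ x) = φ' (algebraMap R _ x) := congr($h x)
  have hφ' (x) (hx : x ∈ J) : φ' (algebraMap R _ x) = 0 := (h' x).symm.trans (hφ x hx)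
  have hmap : J.map (algebraMap R (AdicCompletion J R)) ≤ RingHom.ker φ ⊓ RingHom.ker φ' :=
    le_inf (Ideal.map_le_iff_le_comap.mpr hφ) (Ideal.map_le_iff_le_comap.mpr hφ')
  ext y
  obtain ⟨x, hx⟩ := Ideal.Quotient.mk_surjective (AdicCompletion.evalOneₐ J y)
  have hxy : y - algebraMap R _ x ∈ J.map (algebraMap R (AdicCompletion J R)) := by
    rw [← AdicCompletion.ker_evalOneₐ_eq_map J hJ]
    simp [RingHom.mem_ker, ← hx]
  rw [← sub_add_cancel y (algebraMap R _ x), map_add, map_add,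
    RingHom.mem_ker.mp (hmap hxy).1, RingHom.mem_ker.mp (hmap hxy).2, h']

theorem ker_kerProj (hf : Surjective f) (hfg : (RingHom.ker f).FG) :
    RingHom.ker (AdicCompletion.kerProj hf) =
      (RingHom.ker f).map (algebraMap R (AdicCompletion (RingHom.ker f) R)) := by
  rw [← AdicCompletion.ker_evalOneₐ_eq_map _ hfg]
  ext x
  exact map_eq_zero_iff _ (Ideal.quotientKerAlgEquivOfSurjective hf).injective

theorem kerProj_comp_toAlgHom (hf : Surjective f) :
    (AdicCompletion.kerProj hf).comp (IsScalarTower.toAlgHom B R _) = f := rfl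

theorem exists_algHom_comp_eq_comp_kerProj {ι : Type*} {f : MvPolynomial ι B →ₐ[B] C}
    (hf : Surjective f) (hfg : (RingHom.ker f).FG) {N T : Type*} [CommRing N] [Algebra B N]
    [CommRing T] [Algebra B T] {τ : N →ₐ[B] T} (hτ : Surjective τ)
    [IsAdicComplete (RingHom.ker τ) N] (φ : C →ₐ[B] T) :
    ∃ Ψ : AdicCompletion (RingHom.ker f) (MvPolynomial ι B) →ₐ[B] N,
      τ.comp Ψ = φ.comp (AdicCompletion.kerProj hf) := by
  obtain ⟨ψ, hψ⟩ := exists_mvPolynomial_lift hτ (φ.comp f)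
  have hkill (x) (hx : x ∈ RingHom.ker f) : τ (ψ x) = 0 := by
    rw [← AlgHom.comp_apply, hψ, AlgHom.comp_apply, RingHom.mem_ker.mp hx, map_zero]
  obtain ⟨Ψ, hΨ⟩ := exists_algHom_adicCompletion_extension (J := RingHom.ker f)
    (K := RingHom.ker τ) ψ (Ideal.map_le_iff_le_comap.mpr hkill)
  have hcomp : (τ.comp Ψ).comp (IsScalarTower.toAlgHom B _ _) = φ.comp f := by
    rw [AlgHom.comp_assoc, hΨ, hψ]
  refine ⟨Ψ, adicCompletion_algHom_ext hfg ?_ fun x hx ↦ (congr($hcomp x)).trans ?_⟩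
  · rw [hcomp, AlgHom.comp_assoc, kerProj_comp_toAlgHom hf]
  · simp [RingHom.mem_ker.mp hx]

variable [IsNoetherianRing R]

theorem isAdicComplete_adicCompletion_ker {I : Ideal B} (hI : I ≤ RingHom.ker (algebraMap B C)) :
    IsAdicComplete I (AdicCompletion (RingHom.ker f) R) :=
  (IsAdicComplete.map_algebraMap_iff (S := R) I _).mp
    (isAdicComplete_adicCompletion_of_le (map_algebraMap_le_ker hI f))

theorem exists_section_quotient_kerProj (I : Ideal B) [Algebra (B ⧸ I) C]
    [IsScalarTower B (B ⧸ I) C] [Algebra.FormallySmooth (B ⧸ I) C] (hf : Surjective f) :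
    ∃ s : C →ₐ[B] AdicCompletion (RingHom.ker f) R ⧸ I.map (algebraMap B _),
      (Ideal.Quotient.liftₐ _ (AdicCompletion.kerProj hf)
        (map_algebraMap_le_ker (le_ker_algebraMap I C) _)).comp s = AlgHom.id B C := by
  let Q := AdicCompletion (RingHom.ker f) R
  let π : Q →ₐ[B] C := AdicCompletion.kerProj hf
  have hπ : I.map (algebraMap B Q) ≤ RingHom.ker π :=
    map_algebraMap_le_ker (le_ker_algebraMap I C) π
  let ρ : (Q ⧸ I.map (algebraMap B Q)) →ₐ[B ⧸ I] C :=
    (Ideal.Quotient.liftₐ _ π hπ).extendScalarsOfSurjective Ideal.Quotient.mk_surjective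
  have hρ : Surjective ρ :=
    Ideal.Quotient.lift_surjective_of_surjective _ hπ (AdicCompletion.kerProj_surjective hf)
  have hker : RingHom.ker ρ = (RingHom.ker f).map (algebraMap R (Q ⧸ I.map (algebraMap B Q))) := by
    rw [IsScalarTower.algebraMap_eq R Q, ← Ideal.map_map,
      ← ker_kerProj hf (IsNoetherian.noetherian _)]
    exact Ideal.ker_quotient_lift π.toRingHom hπ
  have hcomplete :=
    isAdicComplete_adicCompletion_quotient_map (RingHom.ker f) (I.map (algebraMap B R))
  rw [Ideal.map_map, ← IsScalarTower.algebraMap_eq] at hcomplete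
  have : IsAdicComplete (RingHom.ker ρ) (Q ⧸ I.map (algebraMap B Q)) := by
    rw [hker]
    exact (IsAdicComplete.map_algebraMap_iff _ _).mpr hcomplete
  obtain ⟨s, hs⟩ := exists_section_of_formallySmooth_s6 hρ
  exact ⟨s.restrictScalars B, AlgHom.ext fun c ↦ congr($hs c)⟩

theorem exists_endomorphism_adicCompletion [IsNoetherianRing B] (I : Ideal B) [Algebra (B ⧸ I) C]
    [IsScalarTower B (B ⧸ I) C] [Algebra.FormallySmooth (B ⧸ I) C] {ι : Type*} [Finite ι]
    {f : MvPolynomial ι B →ₐ[B] C} (hf : Surjective f) :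
    ∃ e : AdicCompletion (RingHom.ker f) (MvPolynomial ι B) →ₐ[B] AdicCompletion _ _,
      (AdicCompletion.kerProj hf).comp e = AdicCompletion.kerProj hf ∧
      ∀ x ∈ RingHom.ker (AdicCompletion.kerProj hf), e x ∈ I.map (algebraMap B _) := by
  let Q := AdicCompletion (RingHom.ker f) (MvPolynomial ι B)
  let q : Q →ₐ[B] Q ⧸ I.map (algebraMap B Q) := Ideal.Quotient.mkₐ B _
  have : IsAdicComplete (RingHom.ker q) Q := by
    have hq : RingHom.ker q = I.map (algebraMap B Q) := Ideal.Quotient.mkₐ_ker B _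
    rw [hq]
    exact (IsAdicComplete.map_algebraMap_iff _ _).mpr
      (isAdicComplete_adicCompletion_ker (le_ker_algebraMap I C))
  obtain ⟨s, hs⟩ := exists_section_quotient_kerProj I hf
  obtain ⟨e, he⟩ := exists_algHom_comp_eq_comp_kerProj hf (IsNoetherian.noetherian _)
    (τ := q) (Ideal.Quotient.mkₐ_surjective B _) s
  refine ⟨e, ?_, fun x hx ↦ ?_⟩
  · calc (AdicCompletion.kerProj hf).comp e
        = (Ideal.Quotient.liftₐ _ (AdicCompletion.kerProj hf)
            (map_algebraMap_le_ker (le_ker_algebraMap I C) _)).comp (q.comp e) := rfl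
      _ = AdicCompletion.kerProj hf := by rw [he, ← AlgHom.comp_assoc, hs, AlgHom.id_comp]
  · have hqe : q (e x) = s (AdicCompletion.kerProj hf x) := congr($he x)
    rw [← Ideal.Quotient.eq_zero_iff_mem]
    exact hqe.trans (by rw [RingHom.mem_ker.mp hx, map_zero])

end KerProj

/-- `σ : E → C` exhibits `E` as a flat, `I`-adically complete lift of `C`. The isomorphism
`E/IE ≅ C` is encoded by the surjectivity and the kernel of `σ`. -/
structure IsFlatAdicLift {R : Type*} [CommRing R] (I : Ideal R) {E C : Type*} [CommRing E]
    [Algebra R E] [CommRing C] [Algebra R C] (σ : E →ₐ[R] C) : Prop where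
  flat : Module.Flat R E
  complete : IsAdicComplete I E
  surjective : Surjective σ
  ker_eq : RingHom.ker σ = I.map (algebraMap R E)

section FlatAdicLift

variable {B : Type*} [CommRing B] {I : Ideal B} {C : Type*} [CommRing C] [Algebra B C]

theorem exists_isFlatAdicLift_of_endomorphism {Q : Type*} [CommRing Q] [Algebra B Q]
    [Module.Flat B Q] [IsAdicComplete I Q] {σ : Q →ₐ[B] C}
    (hσ : Surjective σ) {e : Q →ₐ[B] Q} (hσe : σ.comp e = σ)
    (hker : ∀ x ∈ RingHom.ker σ, e x ∈ I.map (algebraMap B Q))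
    (hI : I ≤ RingHom.ker (algebraMap B C)) :
    ∃ E : Subalgebra B Q, IsFlatAdicLift I (σ.comp E.val) := by
  have hσe' (x : Q) : σ (e x) = σ x := congr($hσe x)
  have htop : ((I • ⊤ : Submodule B Q) : Set Q) = I.map (algebraMap B Q) := by
    rw [Ideal.smul_top_eq_map, Submodule.coe_restrictScalars]
  obtain ⟨E, P, hPi, hPe⟩ := exists_subalgebra_retraction (I := I) e fun x ↦ by
    rw [← SetLike.mem_coe, htop, ← map_sub]
    exact hker _ (by simp [RingHom.mem_ker, hσe'])
  have hPE (x : E) : P x = x := congr($hPi x)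
  have hPe' (x : Q) : (P x : Q) - e x ∈ I.map (algebraMap B Q) := by
    rw [← SetLike.mem_coe, ← htop]; exact hPe x
  have hσP (x : Q) : σ (P x) = σ x := by
    rw [← hσe' x, ← sub_eq_zero, ← map_sub]
    exact map_algebraMap_le_ker hI σ (hPe' x)
  refine ⟨E, Module.Flat.of_retract _ P hPi, isAdicComplete_of_retract _ P hPi, fun c ↦ ?_, ?_⟩
  · obtain ⟨x, rfl⟩ := hσ c
    exact ⟨P x, hσP x⟩
  · refine le_antisymm (fun x hx ↦ ?_) (map_algebraMap_le_ker hI _)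
    have hxI : (x : Q) ∈ (I • ⊤ : Submodule B Q) := by
      rw [← SetLike.mem_coe, htop]
      simpa [hPE] using add_mem (hPe' x) (hker x hx)
    have := Submodule.smul_top_le_comap_smul_top I P hxI
    rwa [Submodule.mem_comap, hPE, Ideal.smul_top_eq_map] at this

theorem IsFlatAdicLift.isAdicComplete_ker {N : Type*} [CommRing N] [Algebra B N] {τ : N →ₐ[B] C}
    (hτ : IsFlatAdicLift I τ) : IsAdicComplete (RingHom.ker τ) N := by
  rw [hτ.ker_eq]
  exact (IsAdicComplete.map_algebraMap_iff _ _).mpr hτ.complete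

theorem IsFlatAdicLift.bijective_of_comp_eq {M N : Type*} [CommRing M] [Algebra B M]
    [CommRing N] [Algebra B N] {σ : M →ₐ[B] C} {τ : N →ₐ[B] C} (hσ : IsFlatAdicLift I σ)
    (hτ : IsFlatAdicLift I τ) {g : M →ₐ[B] N} (hg : τ.comp g = σ) : Bijective g := by
  have := hσ.complete
  have := hτ.complete
  have := hτ.flat
  have hτg (x : M) : τ (g x) = σ x := congr($hg x)
  have hsurj : Surjective g.toLinearMap := by
    refine surjective_of_mkQ_comp_surjective (I := I) fun y ↦ ?_
    obtain ⟨y, rfl⟩ := Submodule.mkQ_surjective _ y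
    obtain ⟨x, hx⟩ := hσ.surjective (τ y)
    refine ⟨x, (Submodule.Quotient.eq _).mpr ?_⟩
    rw [Ideal.smul_top_eq_map, Submodule.restrictScalars_mem, ← hτ.ker_eq]
    simp [RingHom.mem_ker, hτg, hx]
  refine ⟨(LinearMap.ker_eq_bot (f := g.toLinearMap)).mp ?_, hsurj⟩
  have hker : g.toLinearMap.ker ≤ I • ⊤ := fun x hx ↦ by
    rw [Ideal.smul_top_eq_map, Submodule.restrictScalars_mem, ← hσ.ker_eq, RingHom.mem_ker, ← hτg]
    simpa using congr(τ $hx)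
  have hsmul : g.toLinearMap.ker = I • g.toLinearMap.ker := by
    rw [← LinearMap.ker_inf_smul_top_eq_smul_of_flat I _ hsurj, inf_eq_left.mpr hker]
  have hpow (n : ℕ) : g.toLinearMap.ker ≤ I ^ n • ⊤ := by
    induction n with
    | zero => simp only [pow_zero, Ideal.one_eq_top, Submodule.top_smul, le_top]
    | succ n ih =>
      rw [hsmul, pow_succ', mul_smul]
      exact smul_mono_right I ih
  exact (Submodule.eq_bot_iff _).mpr fun x hx ↦
    IsHausdorff.haus inferInstance (I := I) x fun n ↦ SModEq.zero.mpr (hpow n hx)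

theorem exists_versal_flatAdicLift {B : Type u} [CommRing B] [IsNoetherianRing B] (I : Ideal B)
    (C : Type*) [CommRing C] [Algebra B C] [Algebra (B ⧸ I) C] [IsScalarTower B (B ⧸ I) C]
    [Algebra.Smooth (B ⧸ I) C] :
    ∃ (E : Type u) (_ : CommRing E) (_ : Algebra B E) (σ : E →ₐ[B] C), IsFlatAdicLift I σ ∧
      ∀ {N : Type v} [CommRing N] [Algebra B N] {τ : N →ₐ[B] C}, IsFlatAdicLift I τ →
        ∃ g : E →ₐ[B] N, τ.comp g = σ := by
  have : Algebra.FiniteType B C := .trans (S := B ⧸ I) inferInstance inferInstance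
  obtain ⟨n, f, hf⟩ := Algebra.FiniteType.iff_quotient_mvPolynomial''.mp this
  let Q := AdicCompletion (RingHom.ker f) (MvPolynomial (Fin n) B)
  have : IsAdicComplete I Q := isAdicComplete_adicCompletion_ker (le_ker_algebraMap I C)
  have : Module.Flat B Q := .trans B (MvPolynomial (Fin n) B) Q
  obtain ⟨e, hπe, hker⟩ := exists_endomorphism_adicCompletion I hf
  obtain ⟨E, hE⟩ := exists_isFlatAdicLift_of_endomorphism (AdicCompletion.kerProj_surjective hf)
    hπe hker (le_ker_algebraMap I C)
  refine ⟨E, inferInstance, inferInstance, _, hE, fun {N} _ _ τ hτ ↦ ?_⟩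
  have := hτ.isAdicComplete_ker
  obtain ⟨Ψ, hΨ⟩ := exists_algHom_comp_eq_comp_kerProj hf (IsNoetherian.noetherian _)
    hτ.surjective (AlgHom.id B C)
  exact ⟨Ψ.comp E.val, congr(($hΨ).comp E.val)⟩

theorem exists_unique_smooth_lift_general {B : Type u} [CommRing B] [IsNoetherianRing B]
    (I : Ideal B) (C : Type*) [CommRing C] [Algebra B C] [Algebra (B ⧸ I) C]
    [IsScalarTower B (B ⧸ I) C] [Algebra.Smooth (B ⧸ I) C] :
    (∃ (E : Type u) (_ : CommRing E) (_ : Algebra B E) (σ : E →ₐ[B] C), IsFlatAdicLift I σ) ∧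
    ∀ {M N : Type v} [CommRing M] [Algebra B M] [CommRing N] [Algebra B N]
      {σ : M →ₐ[B] C} {τ : N →ₐ[B] C}, IsFlatAdicLift I σ → IsFlatAdicLift I τ →
      ∃ e : M ≃ₐ[B] N, ∀ x, τ (e x) = σ x := by
  obtain ⟨E, _, _, ρ, hρ, hversal⟩ := exists_versal_flatAdicLift I C
  refine ⟨⟨E, _, _, ρ, hρ⟩, fun {M N} _ _ _ _ σ τ hσ hτ ↦ ?_⟩
  obtain ⟨g, hg⟩ := hversal hσ
  obtain ⟨h, hh⟩ := hversal hτ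
  let eM := AlgEquiv.ofBijective g (hρ.bijective_of_comp_eq hσ hg)
  let eN := AlgEquiv.ofBijective h (hρ.bijective_of_comp_eq hτ hh)
  refine ⟨eM.symm.trans eN, fun x ↦ ?_⟩
  obtain ⟨y, rfl⟩ := eM.surjective x
  rw [AlgEquiv.trans_apply, AlgEquiv.symm_apply_apply]
  exact congr($hh y).trans congr($hg y).symm

end FlatAdicLift

section WittLift

variable {p : ℕ} [Fact p.Prime] {k : Type u} [Field k] [CharP k p] [PerfectRing k p]
  {A : Type u} [CommRing A] [Algebra k A] (L : WittLift p k A)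
  (C : Type u) [CommRing C] [Algebra A C]

theorem WittLift.isNoetherianRing [IsNoetherianRing A] : IsNoetherianRing L.B := by
  have := L.complete
  have : IsNoetherianRing (L.B ⧸ Ideal.span {(p : L.B)}) :=
    isNoetherianRing_of_ringEquiv A L.equiv.symm
  exact isNoetherianRing_of_isAdicComplete_span_singleton (p : L.B)

/-- An `A`-algebra `C` as an algebra over `B/pB`, along the identification `B/pB ≅ A`. -/
noncomputable abbrev WittLift.residueAlgebra : Algebra (L.B ⧸ Ideal.span {(p : L.B)}) C :=
  ((algebraMap A C).comp (L.equiv : _ →+* A)).toAlgebra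

/-- An `A`-algebra `C` as an algebra over `B`, along the reduction `B → B/pB ≅ A`. -/
noncomputable abbrev WittLift.algebra : Algebra L.B C :=
  letI := L.residueAlgebra C
  .compHom C (Ideal.Quotient.mk (Ideal.span {(p : L.B)}))

attribute [local instance] WittLift.residueAlgebra WittLift.algebra

theorem WittLift.isScalarTower : IsScalarTower L.B (L.B ⧸ Ideal.span {(p : L.B)}) C :=
  .of_algebraMap_eq fun _ ↦ rfl

theorem WittLift.smooth_residueAlgebra [Algebra.Smooth A C] :
    Algebra.Smooth (L.B ⧸ Ideal.span {(p : L.B)}) C :=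
  (RingHom.Smooth.of_bijective L.equiv.bijective).comp (RingHom.smooth_algebraMap.mpr ‹_›)

variable {L C}

/-- The reduction `C̃ → C̃/pC̃ ≅ C` of a lift, as a homomorphism of `B`-algebras. -/
noncomputable def SmoothLift.reduction (M : SmoothLift p k A L C) : M.Ct →ₐ[L.B] C where
  __ := (M.equiv : _ →+* C).comp (Ideal.Quotient.mk (Ideal.span {(p : M.Ct)}))
  commutes' := M.compat

theorem SmoothLift.isFlatAdicLift_reduction (M : SmoothLift p k A L C) :
    IsFlatAdicLift (Ideal.span {(p : L.B)}) M.reduction where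
  flat := M.flat
  complete := by
    have := M.complete
    rw [← IsAdicComplete.map_algebraMap_iff (S := M.Ct)]
    simpa [Ideal.map_span] using this
  surjective := M.equiv.surjective.comp Ideal.Quotient.mk_surjective
  ker_eq := by
    ext x
    rw [Ideal.map_span, Set.image_singleton, map_natCast,
      ← Ideal.Quotient.eq_zero_iff_mem (I := .span _)]
    exact map_eq_zero_iff M.equiv M.equiv.injective

/-- A flat adic lift of `C` over `B` along `(p)`, repackaged as a `SmoothLift`. -/
noncomputable def IsFlatAdicLift.toSmoothLift {E : Type u} [CommRing E] [Algebra L.B E]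
    {σ : E →ₐ[L.B] C} (hσ : IsFlatAdicLift (Ideal.span {(p : L.B)}) σ) : SmoothLift p k A L C :=
  have hmap : (Ideal.span {(p : L.B)}).map (algebraMap L.B E) = Ideal.span {(p : E)} := by
    rw [Ideal.map_span, Set.image_singleton, map_natCast]
  { Ct := E
    flat := hσ.flat
    complete := hmap ▸ (IsAdicComplete.map_algebraMap_iff _ _).mpr hσ.complete
    equiv := (Ideal.quotEquivOfEq (hσ.ker_eq.trans hmap).symm).trans
      (RingHom.quotientKerEquivOfSurjective hσ.surjective)
    compat := σ.commutes }

end WittLift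

/-- Let `A` be a smooth `k`-algebra with lift `B` and let `A → C` be a smooth
homomorphism of `k`-algebras. Then there exists a `p`-adically complete `B`-algebra `C̃`, flat
over `B`, lifting `A → C`, and such a flat lift is unique up to isomorphism. -/
theorem exists_unique_smooth_lift
    (p : ℕ) [Fact p.Prime] (k : Type u) [Field k] [CharP k p] [PerfectRing k p]
    (A : Type u) [CommRing A] [Algebra k A] (hA : Algebra.Smooth k A)
    (L : WittLift p k A)
    (C : Type u) [CommRing C] [Algebra k C] [Algebra A C] [IsScalarTower k A C]
    (hC : Algebra.Smooth A C) :
    Nonempty (SmoothLift p k A L C) ∧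
    ∀ M₁ M₂ : SmoothLift p k A L C,
      ∃ e : M₁.Ct ≃ₐ[L.B] M₂.Ct,
        ∀ x : M₁.Ct,
          M₂.equiv (Ideal.Quotient.mk _ (e x)) = M₁.equiv (Ideal.Quotient.mk _ x) := by
  have : IsNoetherianRing A := Algebra.FiniteType.isNoetherianRing k A
  have := L.isNoetherianRing
  let _ := L.residueAlgebra C
  let _ := L.algebra C
  have := L.isScalarTower C
  have := L.smooth_residueAlgebra C
  obtain ⟨⟨E, _, _, σ, hσ⟩, hunique⟩ :=
    exists_unique_smooth_lift_general (Ideal.span {(p : L.B)}) C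
  exact ⟨⟨hσ.toSmoothLift⟩, fun M₁ M₂ ↦
    hunique M₁.isFlatAdicLift_reduction M₂.isFlatAdicLift_reduction⟩
end

section
/- Let π : 𝒜 → ℬ be a left exact additive functor between abelian categories, where 𝒜 has enough injectives and there exists d ∈ ℕ with R^nπ = 0 for all n > d, so that π admits a right derived functor Rπ : D(𝒜) → D(ℬ) on the unbounded derived categories (computed on complexes of right π-acyclic objects). Fix a prime p. Let α : C → D be a morphism in D(𝒜) and N : ℤ → ℕ a function with N_i = 0 for all sufficiently large i, such that H^i(α) is a p^{N_i}-isogeny for every i ∈ ℤ. Then there exists a function N' : ℤ → ℕ, depending only on N (and d), with N'_i = 0 for all sufficiently large i, such that H^i(Rπ(α)) is a p^{N'_i}-isogeny for every i ∈ ℤ. -/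
open CategoryTheory CategoryTheory.Limits

universe v₁ v₂ u₁ u₂

/-- In an abelian category, a morphism is a `p^N`-isogeny if its kernel and cokernel are
killed by `p^N`. -/
def IsPIsogeny {C : Type*} [Category C] [Abelian C] (p N : ℕ) {X Y : C} (f : X ⟶ Y) : Prop :=
  (p ^ N) • 𝟙 (kernel f) = 0 ∧ (p ^ N) • 𝟙 (cokernel f) = 0

/-!
By the long exact sequence, the `H^i(α)` are isogenies if and only if the cohomology objects of the
cone `Z` of `α` are killed by powers of `p`; the same applies to `Rπ(α)`, whose cone is `Rπ(Z)`.
The functor `Rπ` has cohomological amplitude in `[0, d]`: for the upper bound, embed a complex into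
an acyclic complex of injectives, and observe that the derived dimension of the terms of the
quotient has dropped by one. Hence `H^i(Rπ(Z))` only depends on the truncation of `Z` to degrees
`i - d, …, i`, and splitting off one cohomology object at a time shows that it is killed by the
product of the powers of `p` killing `H^{i-d}(Z), …, H^i(Z)`.
-/

section Killed

variable {C : Type*} [Category C]

/-- The object `X` is killed by `n`: multiplication by `n` is the zero endomorphism of `X`. -/
def IsKilledBy [Preadditive C] (n : ℕ) (X : C) : Prop := n • 𝟙 X = 0

namespace IsKilledBy

section Preadditive

variable [Preadditive C] {n : ℕ} {X Y Z : C}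

lemma nsmul_comp_eq_zero (h : IsKilledBy n Y) (f : X ⟶ Y) (g : Y ⟶ Z) : n • (f ≫ g) = 0 := by
  rw [← Category.id_comp g, ← Preadditive.comp_nsmul, ← Preadditive.nsmul_comp, h, zero_comp,
    comp_zero]

lemma nsmul_eq_zero_of_source (h : IsKilledBy n X) (f : X ⟶ Y) : n • f = 0 := by
  simpa using h.nsmul_comp_eq_zero (𝟙 X) f

lemma nsmul_eq_zero_of_target (h : IsKilledBy n Y) (f : X ⟶ Y) : n • f = 0 := by
  simpa using h.nsmul_comp_eq_zero f (𝟙 Y)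

lemma of_isZero (n : ℕ) (h : IsZero X) : IsKilledBy n X := h.eq_of_src _ _

lemma of_mono (h : IsKilledBy n Y) (f : X ⟶ Y) [Mono f] : IsKilledBy n X := by
  rw [IsKilledBy, ← cancel_mono f, Preadditive.nsmul_comp, Category.id_comp, zero_comp,
    h.nsmul_eq_zero_of_target]

lemma of_epi (h : IsKilledBy n X) (f : X ⟶ Y) [Epi f] : IsKilledBy n Y := by
  rw [IsKilledBy, ← cancel_epi f, Preadditive.comp_nsmul, Category.comp_id, comp_zero,
    h.nsmul_eq_zero_of_source]

lemma of_dvd {m : ℕ} (h : IsKilledBy m X) (hmn : m ∣ n) : IsKilledBy n X := by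
  obtain ⟨k, rfl⟩ := hmn
  rw [IsKilledBy, mul_comm, mul_smul, h, smul_zero]

lemma map (h : IsKilledBy n X) {D : Type*} [Category D] [Preadditive D] (F : C ⥤ D)
    [F.Additive] : IsKilledBy n (F.obj X) := by
  rw [IsKilledBy, ← F.map_id, ← F.map_nsmul, h, F.map_zero]

end Preadditive

variable [Abelian C]

lemma of_exact {S : ShortComplex C} (hS : S.Exact) {m n : ℕ} (hf : m • S.f = 0)
    (hg : n • S.g = 0) : IsKilledBy (m * n) S.X₂ := by
  obtain ⟨A, q, _, y, hy⟩ :=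
    S.exact_iff_exact_up_to_refinements.1 hS (n • 𝟙 S.X₂) (by simp [hg])
  rw [IsKilledBy, ← cancel_epi q, mul_smul, Preadditive.comp_nsmul, hy,
    ← Preadditive.comp_nsmul, hf, comp_zero, comp_zero]

lemma kernel_of_exact {S : ShortComplex C} (hS : S.Exact) {n : ℕ} (h : IsKilledBy n S.X₁) :
    IsKilledBy n (kernel S.g) :=
  have := hS.epi_kernelLift
  h.of_epi (kernel.lift S.g S.f S.zero)

lemma cokernel_of_exact {S : ShortComplex C} (hS : S.Exact) {n : ℕ} (h : IsKilledBy n S.X₃) :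
    IsKilledBy n (cokernel S.f) :=
  have := hS.mono_cokernelDesc
  h.of_mono (cokernel.desc S.f S.g S.zero)

end IsKilledBy

namespace IsPIsogeny

variable [Abelian C] {p N : ℕ} {X Y Z : C} {f : X ⟶ Y}

lemma isKilledBy_kernel (h : IsPIsogeny p N f) : IsKilledBy (p ^ N) (kernel f) := h.1

lemma isKilledBy_cokernel (h : IsPIsogeny p N f) : IsKilledBy (p ^ N) (cokernel f) := h.2

lemma nsmul_eq_zero_of_comp_eq_zero (h : IsPIsogeny p N f) (g : Z ⟶ X) (w : g ≫ f = 0) :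
    p ^ N • g = 0 := by
  simpa using h.isKilledBy_kernel.nsmul_comp_eq_zero (kernel.lift f g w) (kernel.ι f)

lemma nsmul_eq_zero_of_eq_zero_comp (h : IsPIsogeny p N f) (g : Y ⟶ Z) (w : f ≫ g = 0) :
    p ^ N • g = 0 := by
  simpa using h.isKilledBy_cokernel.nsmul_comp_eq_zero (cokernel.π f) (cokernel.desc f g w)

end IsPIsogeny

end Killed

section Cone

open DerivedCategory Pretriangulated

variable {C : Type*} [Category C] [Abelian C] [HasDerivedCategory C]
  {T : Triangle (DerivedCategory C)} {p : ℕ}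

lemma isKilledBy_homology_obj₃ (hT : T ∈ distTriang _) {N : ℤ → ℕ}
    (hN : ∀ i, IsPIsogeny p (N i) ((homologyFunctor C i).map T.mor₁)) (i : ℤ) :
    IsKilledBy (p ^ (N i + N (i + 1))) ((homologyFunctor C i).obj T.obj₃) := by
  rw [pow_add]
  refine IsKilledBy.of_exact (HomologySequence.exact₃ T hT i (i + 1) rfl) ?_ ?_
  · exact (hN i).nsmul_eq_zero_of_eq_zero_comp _ (by
      rw [← Functor.map_comp, comp_distTriang_mor_zero₁₂ T hT, Functor.map_zero])
  · exact (hN (i + 1)).nsmul_eq_zero_of_comp_eq_zero _ (HomologySequence.δ_comp T hT i _)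

lemma isPIsogeny_homologyMap_mor₁ (hT : T ∈ distTriang _) {M : ℤ → ℕ}
    (hM : ∀ i, IsKilledBy (p ^ M i) ((homologyFunctor C i).obj T.obj₃)) (i : ℤ) :
    IsPIsogeny p (max (M (i - 1)) (M i)) ((homologyFunctor C i).map T.mor₁) :=
  ⟨IsKilledBy.of_dvd (.kernel_of_exact (HomologySequence.exact₁ T hT (i - 1) i (by lia)) (hM _))
      (pow_dvd_pow p (le_max_left _ _)),
    IsKilledBy.of_dvd (.cokernel_of_exact (HomologySequence.exact₂ T hT i) (hM i))
      (pow_dvd_pow p (le_max_right _ _))⟩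

end Cone

section Resolution

open DerivedCategory CochainComplex

variable {C : Type*} [Category C] [Abelian C]

lemma mono_cm5b_i_comp_fst [EnoughInjectives C] {K L : CochainComplex C ℤ} (f : K ⟶ L) :
    Mono (cm5b.i f ≫ biprod.fst) := by
  have (n : ℤ) : Mono ((cm5b.i f ≫ biprod.fst).f n) :=
    mono_of_mono_fac (h := Injective.ι (K.X n)) ((Category.assoc _ _ _).trans (cm5b.i_f_comp f n))
  exact HomologicalComplex.mono_of_mono_f _ this

variable [HasDerivedCategory C]

lemma isZero_Q_obj_mappingCone_id (K : CochainComplex C ℤ) :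
    IsZero (Q.obj (mappingCone (𝟙 K))) := by
  rw [IsZero.iff_id_eq_zero, ← Q.map_id, Q_map_eq_of_homotopy _ (mappingCone.homotopyToZeroOfId K),
    Q.map_zero]

lemma exists_shortExact_injective [EnoughInjectives C] (K : CochainComplex C ℤ) :
    ∃ S : ShortComplex (CochainComplex C ℤ), S.ShortExact ∧ S.X₁ = K ∧
      (∀ n, Injective (S.X₂.X n)) ∧ IsZero (Q.obj S.X₂) ∧
      ∀ a, K.IsStrictlyLE a → S.X₃.IsStrictlyLE a := by
  let f : K ⟶ mappingCone (𝟙 (cm5b.I K)) := cm5b.i (𝟙 K) ≫ biprod.fst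
  refine ⟨.mk f (cokernel.π f) (cokernel.condition f), .mk' (ShortComplex.exact_cokernel f)
    (mono_cm5b_i_comp_fst (𝟙 K)) (coequalizer.π_epi), rfl, fun n => inferInstance,
    isZero_Q_obj_mappingCone_id _, fun a _ => ?_⟩
  refine (isStrictlyLE_iff _ _).2 fun n hn => IsZero.of_epi ((cokernel.π f).f n) ?_
  exact (mappingCone.isZero_X_iff _ _).2
    ⟨Injective.isZero_under _ (K.isZero_of_isStrictlyLE a _ (by lia)),
      Injective.isZero_under _ (K.isZero_of_isStrictlyLE a n hn)⟩

end Resolution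

section RightDerived

open DerivedCategory Pretriangulated

variable {𝒜 ℬ : Type*} [Category 𝒜] [Abelian 𝒜] [Category ℬ] [Abelian ℬ]

/-- Up to isomorphism, extending a complex by zero and restricting it back commutes with `π`. -/
noncomputable def mapRestrictionExtendIso (π : 𝒜 ⥤ ℬ) [π.Additive] {ι ι' : Type*}
    {c : ComplexShape ι} {c' : ComplexShape ι'} (e : c.Embedding c') [e.IsRelIff]
    (K : HomologicalComplex 𝒜 c) :
    ((π.mapHomologicalComplex c').obj (K.extend e)).restriction e ≅
      (π.mapHomologicalComplex c).obj K :=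
  HomologicalComplex.Hom.isoOfComponents (fun i => π.mapIso (K.extendXIso e rfl)) fun i j _ => by
    change π.map _ ≫ π.map _ = π.map _ ≫ π.map _
    rw [K.extend_d_eq e rfl rfl, ← π.map_comp, ← π.map_comp]
    simp

variable [EnoughInjectives 𝒜]

/-- The right derived functors of `π` vanish on `X` in degrees `> d`. For `d = 0` this says that
`X` is right `π`-acyclic. -/
def RightDerivedDimLE (π : 𝒜 ⥤ ℬ) [π.Additive] (d : ℕ) (X : 𝒜) : Prop :=
  ∀ n : ℕ, d < n → IsZero ((π.rightDerived n).obj X)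

variable (π : 𝒜 ⥤ ℬ) [π.Additive]

lemma RightDerivedDimLE.of_injective (X : 𝒜) [Injective X] : RightDerivedDimLE π 0 X
  | n + 1, _ => π.isZero_rightDerived_obj_injective_succ n X

/-- The complex `π(R)` attached to an injective resolution `R` of `X` computes the right derived
functors of `π` at `X`. In degree `0` this would require `π` to be left exact. -/
noncomputable def homologyMapCochainComplexIso {X : 𝒜} (R : InjectiveResolution X) (n : ℕ) :
    ((π.mapHomologicalComplex (.up ℤ)).obj R.cochainComplex).homology (n + 1 : ℤ) ≅
      (π.rightDerived (n + 1)).obj X :=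
  (HomologicalComplex.restrictionHomologyIso _ ComplexShape.embeddingUpNat n (n + 1) (n + 2)
      (by simp) (by simp) (i' := n) (k' := n + 2) rfl (by simp) (by simp) (by simp)
      (by simp; lia)).symm ≪≫
    HomologicalComplex.homologyMapIso (mapRestrictionExtendIso π _ R.cocomplex) (n + 1) ≪≫
    (R.isoRightDerivedObj π (n + 1)).symm

variable {π} [HasDerivedCategory 𝒜] [HasDerivedCategory ℬ]

/-- The functor `F` on derived categories is computed by applying `π` termwise to complexes of
right `π`-acyclic objects. -/
def IsComputedByAcyclics (π : 𝒜 ⥤ ℬ) [π.Additive] (F : DerivedCategory 𝒜 ⥤ DerivedCategory ℬ) :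
    Prop :=
  ∀ K : CochainComplex 𝒜 ℤ, (∀ i, RightDerivedDimLE π 0 (K.X i)) →
    Nonempty (F.obj (Q.obj K) ≅ Q.obj ((π.mapHomologicalComplex (ComplexShape.up ℤ)).obj K))

namespace IsComputedByAcyclics

variable {F : DerivedCategory 𝒜 ⥤ DerivedCategory ℬ}

lemma nonempty_homology_single_iso (hF : IsComputedByAcyclics π F) (X : 𝒜) (n : ℕ) :
    Nonempty ((homologyFunctor ℬ (n + 1)).obj (F.obj ((singleFunctor 𝒜 0).obj X)) ≅
      (π.rightDerived (n + 1)).obj X) := by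
  let R := InjectiveResolution.of X
  obtain ⟨e⟩ := hF R.cochainComplex fun i => .of_injective π _
  exact ⟨(homologyFunctor ℬ _).mapIso
    (F.mapIso ((singleFunctorIsoCompQ 𝒜 0).app X ≪≫ asIso (Q.map R.ι')) ≪≫ e) ≪≫
    (homologyFunctorFactors ℬ _).app _ ≪≫ homologyMapCochainComplexIso π R n⟩

variable [F.CommShift ℤ] [F.IsTriangulated]

lemma rightDerivedDimLE_of_shortExact (hF : IsComputedByAcyclics π F) {S : ShortComplex 𝒜}
    (hS : S.ShortExact) (hI : Injective S.X₂) {k : ℕ} (h : RightDerivedDimLE π (k + 1) S.X₁) :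
    RightDerivedDimLE π k S.X₃
  | n + 1, hn => by
    obtain ⟨e₁⟩ := hF.nonempty_homology_single_iso S.X₁ (n + 1)
    obtain ⟨e₂⟩ := hF.nonempty_homology_single_iso S.X₂ n
    obtain ⟨e₃⟩ := hF.nonempty_homology_single_iso S.X₃ n
    have hT := F.map_distinguished _ hS.singleTriangle_distinguished
    refine IsZero.of_iso ?_ e₃.symm
    exact (HomologySequence.exact₃ _ hT _ _ rfl).isZero_of_both_zeros
      (((π.isZero_rightDerived_obj_injective_succ n S.X₂).of_iso e₂).eq_of_src _ _)
      (((h (n + 2) (by lia)).of_iso e₁).eq_of_tgt _ _)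

end IsComputedByAcyclics

end RightDerived

section Amplitude

open DerivedCategory Pretriangulated

variable {𝒜 ℬ : Type*} [Category 𝒜] [Abelian 𝒜] [HasDerivedCategory 𝒜]
  [Category ℬ] [Abelian ℬ] [HasDerivedCategory ℬ]

lemma isLE_obj₁_of_distTriang {T : Triangle (DerivedCategory 𝒜)} (hT : T ∈ distTriang _) {n : ℤ}
    (h₂ : T.obj₂.IsLE (n + 1)) (h₃ : T.obj₃.IsLE n) : T.obj₁.IsLE (n + 1) :=
  (isLE_iff _ _).2 fun i hi =>
    (HomologySequence.exact₁ T hT (i - 1) i (by lia)).isZero_of_both_zeros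
      ((T.obj₃.isZero_of_isLE n (i - 1) (by lia)).eq_of_src _ _)
      ((T.obj₂.isZero_of_isLE (n + 1) i hi).eq_of_tgt _ _)

/-- The functor `F` has cohomological amplitude in `[0, d]`: it does not lower degrees, and raises
them by at most `d`. -/
structure HasAmplitudeLE (F : DerivedCategory 𝒜 ⥤ DerivedCategory ℬ) (d : ℕ) : Prop where
  isGE_obj (X : DerivedCategory 𝒜) (n : ℤ) [X.IsGE n] : (F.obj X).IsGE n
  isLE_obj (X : DerivedCategory 𝒜) (n : ℤ) [X.IsLE n] : (F.obj X).IsLE (n + d)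

namespace IsComputedByAcyclics

variable [EnoughInjectives 𝒜] {π : 𝒜 ⥤ ℬ} [π.Additive]
  {F : DerivedCategory 𝒜 ⥤ DerivedCategory ℬ}

lemma isGE_obj (hF : IsComputedByAcyclics π F) (X : DerivedCategory 𝒜) (n : ℤ) [X.IsGE n] :
    (F.obj X).IsGE n := by
  obtain ⟨K, _, ⟨e⟩⟩ := X.exists_iso_Q_obj_of_isGE n
  obtain ⟨I, i, _, _, _⟩ :=
    CochainComplex.Plus.modelCategoryQuillen.exists_quasiIso_injective K n
  obtain ⟨e'⟩ := hF I fun j => .of_injective π _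
  exact TStructure.t.isGE_of_iso (F.mapIso (e ≪≫ asIso (Q.map i)) ≪≫ e').symm n

variable [F.CommShift ℤ] [F.IsTriangulated]

lemma isLE_obj_Q_obj (hF : IsComputedByAcyclics π F) {d : ℕ} {K : CochainComplex 𝒜 ℤ}
    (hK : ∀ i, RightDerivedDimLE π d (K.X i)) (n : ℤ) [K.IsStrictlyLE n] :
    (F.obj (Q.obj K)).IsLE (n + d) := by
  induction d generalizing K with
  | zero =>
    obtain ⟨e⟩ := hF K hK
    rw [Nat.cast_zero, add_zero]
    exact TStructure.t.isLE_of_iso e.symm n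
  | succ d ih =>
    obtain ⟨S, hS, rfl, hI, hQ, hLE⟩ := exists_shortExact_injective K
    have := hLE n inferInstance
    have hT := F.map_distinguished _ (triangleOfSES_distinguished hS)
    rw [Nat.cast_succ, ← add_assoc]
    refine isLE_obj₁_of_distTriang hT ?_ (ih fun i => ?_)
    · exact (isLE_iff _ _).2 fun i _ => Functor.map_isZero _ (F.map_isZero hQ)
    · exact hF.rightDerivedDimLE_of_shortExact
        (hS.map_of_exact (HomologicalComplex.eval _ _ i)) (hI i) (hK i)

lemma hasAmplitudeLE (hF : IsComputedByAcyclics π F) {d : ℕ}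
    (hd : ∀ X : 𝒜, RightDerivedDimLE π d X) : HasAmplitudeLE F d where
  isGE_obj X n _ := hF.isGE_obj X n
  isLE_obj X n _ := by
    obtain ⟨K, _, ⟨e⟩⟩ := X.exists_iso_Q_obj_of_isLE n
    have := hF.isLE_obj_Q_obj (fun i => hd (K.X i)) n
    exact TStructure.t.isLE_of_iso (F.mapIso e).symm (n + d)

end IsComputedByAcyclics

end Amplitude

section Devissage

open DerivedCategory Pretriangulated

variable {𝒜 ℬ : Type*} [Category 𝒜] [Abelian 𝒜] [HasDerivedCategory 𝒜]
  [Category ℬ] [Abelian ℬ] [HasDerivedCategory ℬ]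

lemma isIso_homologyMap_mor₁ {T : Triangle (DerivedCategory 𝒜)} (hT : T ∈ distTriang _) {n : ℤ}
    (h₃ : T.obj₃.IsGE n) {j : ℤ} (hj : j < n) : IsIso ((homologyFunctor 𝒜 j).map T.mor₁) :=
  have := (HomologySequence.mono_homologyMap_mor₁_iff T hT (j - 1) j).2
    ((T.obj₃.isZero_of_isGE n (j - 1) (by lia)).eq_of_src _ _)
  have := (HomologySequence.epi_homologyMap_mor₁_iff T hT j).2
    ((T.obj₃.isZero_of_isGE n j hj).eq_of_tgt _ _)
  isIso_of_mono_of_epi _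

lemma isIso_homologyMap_mor₂ {T : Triangle (DerivedCategory 𝒜)} (hT : T ∈ distTriang _) {n : ℤ}
    (h₁ : T.obj₁.IsLE n) {j : ℤ} (hj : n < j) : IsIso ((homologyFunctor 𝒜 j).map T.mor₂) :=
  have := (HomologySequence.mono_homologyMap_mor₂_iff T hT j).2
    ((T.obj₁.isZero_of_isLE n j hj).eq_of_src _ _)
  have := (HomologySequence.epi_homologyMap_mor₂_iff T hT j (j + 1)).2
    ((T.obj₁.isZero_of_isLE n (j + 1) (by lia)).eq_of_tgt _ _)
  isIso_of_mono_of_epi _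

lemma isGE_obj₁_of_distTriang {T : Triangle (DerivedCategory 𝒜)} (hT : T ∈ distTriang _) {n : ℤ}
    (h₂ : T.obj₂.IsGE n) (h₃ : T.obj₃.IsGE n) : T.obj₁.IsGE n :=
  (isGE_iff _ _).2 fun i hi =>
    have := isIso_homologyMap_mor₁ hT h₃ hi
    ((isGE_iff _ _).1 h₂ i hi).of_iso (asIso ((homologyFunctor 𝒜 i).map T.mor₁))

lemma isKilledBy_homology_obj₃_of_truncation {T : Triangle (DerivedCategory 𝒜)}
    (hT : T ∈ distTriang _) {n : ℤ} (h₁ : T.obj₁.IsLE n) (h₃ : T.obj₃.IsGE (n + 1)) {m : ℤ → ℕ}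
    (hm : ∀ j, IsKilledBy (m j) ((homologyFunctor 𝒜 j).obj T.obj₂)) (j : ℤ) :
    IsKilledBy (m j) ((homologyFunctor 𝒜 j).obj T.obj₃) := by
  obtain hj | hj := lt_or_ge n j
  · have := isIso_homologyMap_mor₂ hT h₁ hj
    exact (hm j).of_epi ((homologyFunctor 𝒜 j).map T.mor₂)
  · exact .of_isZero _ (T.obj₃.isZero_of_isGE (n + 1) j (by lia))

lemma isKilledBy_of_homology {X : DerivedCategory 𝒜} (n : ℤ) [X.IsGE n] [X.IsLE n] {m : ℕ}
    (h : IsKilledBy m ((homologyFunctor 𝒜 n).obj X)) : IsKilledBy m X := by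
  obtain ⟨Y, ⟨e⟩⟩ := X.exists_iso_singleFunctor_obj_of_isGE_of_isLE n
  let e' := (homologyFunctor 𝒜 n).mapIso e ≪≫ (singleFunctorCompHomologyFunctorIso 𝒜 n).app Y
  exact ((h.of_epi e'.hom).map (singleFunctor 𝒜 n)).of_epi e.inv

namespace HasAmplitudeLE

variable {F : DerivedCategory 𝒜 ⥤ DerivedCategory ℬ} [F.CommShift ℤ] [F.IsTriangulated] {d : ℕ}

lemma isKilledBy_homology_obj_of_isGE (hF : HasAmplitudeLE F d) {m : ℤ → ℕ} (i : ℤ) (k : ℕ)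
    {X : DerivedCategory 𝒜} [X.IsGE (i + 1 - k)]
    (hm : ∀ j, IsKilledBy (m j) ((homologyFunctor 𝒜 j).obj X)) :
    IsKilledBy (∏ j ∈ Finset.range k, m (i - j)) ((homologyFunctor ℬ i).obj (F.obj X)) := by
  induction k generalizing X with
  | zero =>
    have := hF.isGE_obj X (i + 1 - (0 : ℕ))
    exact .of_isZero _ ((F.obj X).isZero_of_isGE (i + 1 - (0 : ℕ)) i (by simp))
  | succ k ih =>
    obtain ⟨Y, Z, hY, hZ, f, g, h, hT⟩ :=
      TStructure.t.exists_triangle X (i - k) (i - k + 1) rfl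
    have hYLE : Y.IsLE (i - k) := ⟨hY⟩
    have hZGE : Z.IsGE (i - k + 1) := ⟨hZ⟩
    have hXGE : X.IsGE (i - k) := TStructure.t.isGE_of_ge X (i - k) (i + 1 - (k + 1 : ℕ))
    have hYGE : Y.IsGE (i - k) := isGE_obj₁_of_distTriang hT hXGE
      (TStructure.t.isGE_of_ge Z (i - k) (i - k + 1))
    have : IsIso ((homologyFunctor 𝒜 (i - k)).map f) :=
      isIso_homologyMap_mor₁ hT hZGE (lt_add_one (i - k : ℤ))
    have hYm : IsKilledBy (m (i - k)) Y := isKilledBy_of_homology (i - k)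
      ((hm _).of_mono ((homologyFunctor 𝒜 (i - k)).map f))
    have : Z.IsGE (i + 1 - k) := by rwa [add_sub_right_comm]
    have hZm := ih (X := Z) (isKilledBy_homology_obj₃_of_truncation hT hYLE hZGE hm)
    rw [Finset.prod_range_succ, mul_comm]
    exact .of_exact (HomologySequence.exact₂ _ (F.map_distinguished _ hT) i)
      (((hYm.map F).map (homologyFunctor ℬ i)).nsmul_eq_zero_of_source _)
      (hZm.nsmul_eq_zero_of_target _)

lemma isKilledBy_homology_obj (hF : HasAmplitudeLE F d) {m : ℤ → ℕ} {X : DerivedCategory 𝒜}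
    (hm : ∀ j, IsKilledBy (m j) ((homologyFunctor 𝒜 j).obj X)) (i : ℤ) :
    IsKilledBy (∏ j ∈ Finset.range (d + 1), m (i - j)) ((homologyFunctor ℬ i).obj (F.obj X)) := by
  obtain ⟨Y, Z, hY, hZ, f, g, h, hT⟩ :=
    TStructure.t.exists_triangle X (i - d - 1) (i - d - 1 + 1) rfl
  have hYLE : Y.IsLE (i - d - 1) := ⟨hY⟩
  have hZGE : Z.IsGE (i - d - 1 + 1) := ⟨hZ⟩
  have : Z.IsGE (i + 1 - (d + 1 : ℕ)) := TStructure.t.isGE_of_ge Z _ (i - d - 1 + 1)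
  have : IsIso ((homologyFunctor ℬ i).map (F.map g)) :=
    isIso_homologyMap_mor₂ (F.map_distinguished _ hT) (hF.isLE_obj Y (i - d - 1)) (by lia)
  exact (hF.isKilledBy_homology_obj_of_isGE i (d + 1) (X := Z)
    (isKilledBy_homology_obj₃_of_truncation hT hYLE hZGE hm)).of_mono
      ((homologyFunctor ℬ i).map (F.map g))

end HasAmplitudeLE

end Devissage

/-- The exponent of a power of `p` killing `H^i(Rπ(cone α))`, when the `H^i(α)` are
`p ^ N i`-isogenies and `Rπ` has amplitude in `[0, d]`. -/
def coneExponent (d : ℕ) (N : ℤ → ℕ) (i : ℤ) : ℕ :=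
  ∑ j ∈ Finset.range (d + 1), (N (i - j) + N (i - j + 1))

/-- The exponent `N'` of the isogenies `H^i(Rπ(α))`: the kernel and the cokernel of `H^i(Rπ(α))`
are controlled by the cone of `Rπ(α)` in degrees `i - 1` and `i` respectively. -/
def derivedExponent (d : ℕ) (N : ℤ → ℕ) (i : ℤ) : ℕ :=
  max (coneExponent d N (i - 1)) (coneExponent d N i)

lemma coneExponent_eq_zero {d : ℕ} {N : ℤ → ℕ} {i₀ : ℤ} (hN : ∀ i, i₀ ≤ i → N i = 0) {i : ℤ}
    (hi : i₀ + d ≤ i) : coneExponent d N i = 0 :=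
  Finset.sum_eq_zero fun j hj => by
    rw [Finset.mem_range] at hj
    rw [hN _ (by lia), hN _ (by lia), add_zero]

lemma derivedExponent_eq_zero {d : ℕ} {N : ℤ → ℕ} {i₀ : ℤ} (hN : ∀ i, i₀ ≤ i → N i = 0) {i : ℤ}
    (hi : i₀ + d + 1 ≤ i) : derivedExponent d N i = 0 := by
  rw [derivedExponent, coneExponent_eq_zero hN (by lia), coneExponent_eq_zero hN (by lia), max_self]

theorem isogeny_of_derived_pushforward_general {𝒜 ℬ : Type*} [Category 𝒜] [Abelian 𝒜]
    [HasDerivedCategory 𝒜] [Category ℬ] [Abelian ℬ] [HasDerivedCategory ℬ] [EnoughInjectives 𝒜]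
    {π : 𝒜 ⥤ ℬ} [π.Additive] {d : ℕ} (hd : ∀ X : 𝒜, RightDerivedDimLE π d X)
    {F : DerivedCategory 𝒜 ⥤ DerivedCategory ℬ} [F.CommShift ℤ] [F.IsTriangulated]
    (hF : IsComputedByAcyclics π F) {p : ℕ} {N : ℤ → ℕ} {X Y : DerivedCategory 𝒜} {α : X ⟶ Y}
    (hα : ∀ i, IsPIsogeny p (N i) ((DerivedCategory.homologyFunctor 𝒜 i).map α)) (i : ℤ) :
    IsPIsogeny p (derivedExponent d N i)
      ((DerivedCategory.homologyFunctor ℬ i).map (F.map α)) := by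
  obtain ⟨Z, g, h, hT⟩ := Pretriangulated.distinguished_cocone_triangle α
  have hZ : ∀ j, IsKilledBy (p ^ (N j + N (j + 1)))
      ((DerivedCategory.homologyFunctor 𝒜 j).obj Z) := isKilledBy_homology_obj₃ hT hα
  have hFZ (j : ℤ) : IsKilledBy (p ^ coneExponent d N j)
      ((DerivedCategory.homologyFunctor ℬ j).obj (F.obj Z)) := by
    rw [coneExponent, ← Finset.prod_pow_eq_pow_sum]
    exact (hF.hasAmplitudeLE hd).isKilledBy_homology_obj hZ j
  exact isPIsogeny_homologyMap_mor₁ (F.map_distinguished _ hT) hFZ i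

/-- Let `π : 𝒜 → ℬ` be a left exact additive functor between abelian
categories, where `𝒜` has enough injectives and `Rⁿπ = 0` for `n > d`, so that `π` admits a
right derived functor `Rπ : D(𝒜) → D(ℬ)` (a triangulated functor computed termwise on
complexes of right `π`-acyclic objects).  Let `α : C → D` in `D(𝒜)` and `N : ℤ → ℕ` with
`N_i = 0` for `i` large, such that `H^i(α)` is a `p^{N_i}`-isogeny for all `i`.  Then there is
`N' : ℤ → ℕ`, depending only on `N` (and `d`), vanishing for `i` large, such that `H^i(Rπ(α))`
is a `p^{N'_i}`-isogeny for all `i`. -/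
theorem isogeny_of_derived_pushforward
    (p : ℕ) (hp : p.Prime) (d : ℕ) (N : ℤ → ℕ) (i₀ : ℤ) (hN : ∀ i : ℤ, i₀ ≤ i → N i = 0) :
    ∃ N' : ℤ → ℕ, (∃ i₁ : ℤ, ∀ i : ℤ, i₁ ≤ i → N' i = 0) ∧
      ∀ (𝒜 : Type u₁) [Category.{v₁} 𝒜] [Abelian 𝒜] [HasDerivedCategory 𝒜]
        (ℬ : Type u₂) [Category.{v₂} ℬ] [Abelian ℬ] [HasDerivedCategory ℬ]
        (π : 𝒜 ⥤ ℬ) [π.Additive] [PreservesFiniteLimits π] [EnoughInjectives 𝒜],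
        (∀ n : ℕ, d < n → ∀ X : 𝒜, IsZero ((π.rightDerived n).obj X)) →
        ∀ (F : DerivedCategory 𝒜 ⥤ DerivedCategory ℬ) [F.CommShift ℤ] [F.IsTriangulated],
          -- `F` is the right derived functor of `π`: it is computed termwise on complexes of
          -- right `π`-acyclic objects.
          (∀ K : CochainComplex 𝒜 ℤ,
            (∀ (i : ℤ) (n : ℕ), 1 ≤ n → IsZero ((π.rightDerived n).obj (K.X i))) →
            Nonempty (F.obj (DerivedCategory.Q.obj K) ≅
              DerivedCategory.Q.obj ((π.mapHomologicalComplex (ComplexShape.up ℤ)).obj K))) →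
          ∀ (C D : DerivedCategory 𝒜) (α : C ⟶ D),
            (∀ i : ℤ, IsPIsogeny p (N i) ((DerivedCategory.homologyFunctor 𝒜 i).map α)) →
            ∀ i : ℤ, IsPIsogeny p (N' i)
              ((DerivedCategory.homologyFunctor ℬ i).map (F.map α)) :=
  ⟨derivedExponent d N, ⟨i₀ + d + 1, fun _ => derivedExponent_eq_zero hN⟩,
    fun _ _ _ _ _ _ _ _ _ _ _ _ hd _ _ _ hF _ _ _ hα =>
      isogeny_of_derived_pushforward_general (fun X n hn => hd n hn X) hF hα⟩
end

section
/- Let B be a commutative ring and p ∈ B. Let M be a p-adically complete B-module (i.e. M ≅ lim_n M/p^nM), let X be any B-module, and let X̂ = lim_n X/p^nX be its p-adic completion. Then precomposition with the canonical map X → X̂ induces a bijection Hom_B(X̂, M) ≅ Hom_B(X, M); that is, every B-linear map from X to a p-adically complete module factors uniquely through the p-adic completion of X. -/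
/-!
A linear map `g : X → M` into a complete module extends to `X̂ → M̂ ≅ M` by functoriality. The
extension is unique because the image of `X` is dense in `X̂` and linear maps are automatically
continuous for the `I`-adic topologies. Density holds because `X` surjects onto `X/IⁿX` and, for
finitely generated `I`, the kernel of `X̂ → X/IⁿX` is `IⁿX̂`.
-/

section UniversalProperty

variable {R : Type*} [CommRing R] (I : Ideal R)
variable {X : Type*} [AddCommGroup X] [Module R X]
variable {Y : Type*} [AddCommGroup Y] [Module R Y]
variable {M : Type*} [AddCommGroup M] [Module R M]

theorem linearMap_eq_of_comp_eq_of_range_sup_pow_smul_top [IsHausdorff I M] {i : X →ₗ[R] Y}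
    (hi : ∀ n : ℕ, i.range ⊔ I ^ n • (⊤ : Submodule R Y) = ⊤) {f g : Y →ₗ[R] M}
    (hfg : f ∘ₗ i = g ∘ₗ i) : f = g := by
  have range_le (n : ℕ) : (f - g).range ≤ I ^ n • (⊤ : Submodule R M) :=
    calc (f - g).range
        = ((f - g) ∘ₗ i).range ⊔ I ^ n • (f - g).range := by
          rw [LinearMap.range_eq_map (f - g), ← Submodule.map_smul'', LinearMap.range_comp,
            ← Submodule.map_sup, hi]
      _ = I ^ n • (f - g).range := by
          rw [LinearMap.sub_comp, hfg, sub_self, LinearMap.range_zero, bot_sup_eq]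
      _ ≤ I ^ n • ⊤ := Submodule.smul_mono le_rfl le_top
  rw [← sub_eq_zero, ← LinearMap.range_eq_bot, ← le_bot_iff,
    ← IsHausdorff.iInf_pow_smul (I := I) (M := M) inferInstance]
  exact le_iInf range_le

variable {I} in
theorem range_adicCompletionOf_sup_pow_smul_top (hI : I.FG) (n : ℕ) :
    (AdicCompletion.of I X).range ⊔ I ^ n • (⊤ : Submodule R (AdicCompletion I X)) = ⊤ := by
  rw [AdicCompletion.pow_smul_top_eq_ker_eval hI, ← Submodule.comap_map_eq,
    ← LinearMap.range_comp, AdicCompletion.eval_comp_of, Submodule.range_mkQ, Submodule.comap_top]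

/-- The extension to the `I`-adic completion of a linear map into an `I`-adically complete module,
obtained by completing the map and identifying the target with its completion. -/
noncomputable def adicCompletionLift [IsAdicComplete I M] (g : X →ₗ[R] M) :
    AdicCompletion I X →ₗ[R] M :=
  (AdicCompletion.ofLinearEquiv I M).symm ∘ₗ (AdicCompletion.map I g).restrictScalars R

theorem adicCompletionLift_comp_of [IsAdicComplete I M] (g : X →ₗ[R] M) :
    adicCompletionLift I g ∘ₗ AdicCompletion.of I X = g := by
  ext x
  simp [adicCompletionLift, AdicCompletion.map_of]

variable {I} in
theorem universal_property_of_p_adic_completion_general (hI : I.FG) [IsAdicComplete I M] :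
    Function.Bijective
      (fun f : AdicCompletion I X →ₗ[R] M => f ∘ₗ AdicCompletion.of I X) :=
  ⟨fun _ _ hfg => linearMap_eq_of_comp_eq_of_range_sup_pow_smul_top I
      (range_adicCompletionOf_sup_pow_smul_top hI) hfg,
    fun g => ⟨adicCompletionLift I g, adicCompletionLift_comp_of I g⟩⟩

end UniversalProperty

/-- Let `B` be a commutative ring and `p ∈ B`. If `M` is a `p`-adically
complete `B`-module, then for any `B`-module `X`, precomposition with the canonical map
`X → X̂ = lim_n X/pⁿX` is a bijection `Hom_B(X̂, M) ≅ Hom_B(X, M)`: every `B`-linear map from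
`X` to a `p`-adically complete module factors uniquely through the `p`-adic completion. -/
theorem universal_property_of_p_adic_completion
    (B : Type*) [CommRing B] (p : B)
    (M : Type*) [AddCommGroup M] [Module B M]
    (X : Type*) [AddCommGroup X] [Module B X]
    (hM : IsAdicComplete (Ideal.span {p}) M) :
    Function.Bijective
      (fun f : AdicCompletion (Ideal.span {p}) X →ₗ[B] M =>
        f.comp (AdicCompletion.of (Ideal.span {p}) X)) :=
  universal_property_of_p_adic_completion_general (Submodule.fg_span_singleton p)
end
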